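/- arXiv:2105.15081 — 3 statements merged into one kernel-verified Lean document; each statement's English description precedes it below -/
import Mathlib

section
/- Let b_1,…,b_N be i.i.d. N(0, (1/N) I_{n−1}) Gaussian vectors and v ∈ ℝ^N a fixed vector. There is a universal constant C > 0 such that for any δ ∈ (0,1), with probability at least 1−δ, ‖Σ_{i=1}^N (‖b_i‖² − (n−1)/N) v_i b_i‖ ≤ C( ‖v‖·n·√(log(N/δ))/N^{3/2} + ‖v‖_∞·n·log^{5/2}(N/δ)/N^{3/2} ). -/
open MeasureTheory ProbabilityTheory Matrix

/-- Euclidean norm of a vector in `ℝ^k`. -/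
noncomputable def eucNorm {k : ℕ} (v : Fin k → ℝ) : ℝ := Real.sqrt (∑ i, (v i) ^ 2)

/-- Supremum (ℓ_∞) norm of a vector in `ℝ^k`. -/
noncomputable def supNorm {k : ℕ} (v : Fin k → ℝ) : ℝ := ⨆ i, |v i|

/-- The Gaussian measure `N(0, σ2 · I_k)` on `ℝ^k`. -/
noncomputable def gaussVec (k : ℕ) (σ2 : NNReal) : Measure (Fin k → ℝ) :=
  Measure.pi fun _ => gaussianReal 0 σ2

instance (k : ℕ) (σ2 : NNReal) : IsProbabilityMeasure (gaussVec k σ2) := by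
  unfold gaussVec; infer_instance

/-- The law of `N` i.i.d. samples from `N(0, σ2 · I_k)`. -/
noncomputable def iidGaussVec (N k : ℕ) (σ2 : NNReal) : Measure (Fin N → Fin k → ℝ) :=
  Measure.pi fun _ => gaussVec k σ2

/-- Spreading two numbers apart while keeping the sum of their squares fixed increases the sum
of their hyperbolic cosines. -/
lemma cosh_add_cosh_le_of_sq_add_sq_eq {a c p q : ℝ} (hpa : p ^ 2 ≤ a ^ 2) (hqa : q ^ 2 ≤ a ^ 2)
    (h : p ^ 2 + q ^ 2 = a ^ 2 + c ^ 2) :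
    Real.cosh p + Real.cosh q ≤ Real.cosh a + Real.cosh c := by
  refine hasSum_le (fun k => ?_) ((Real.hasSum_cosh p).add (Real.hasSum_cosh q))
    ((Real.hasSum_cosh a).add (Real.hasSum_cosh c))
  simp only [pow_mul]
  rw [← add_div, ← add_div]
  refine div_le_div_of_nonneg_right ?_ (by positivity)
  have h1 := geom_sum₂_mul (p ^ 2) (c ^ 2) k
  have h2 := geom_sum₂_mul (a ^ 2) (q ^ 2) k
  have h3 : ∑ i ∈ Finset.range k, (p ^ 2) ^ i * (c ^ 2) ^ (k - 1 - i) ≤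
      ∑ i ∈ Finset.range k, (a ^ 2) ^ i * (q ^ 2) ^ (k - 1 - i) := by
    have : c ^ 2 ≤ q ^ 2 := by linarith
    gcongr
  have h4 := mul_le_mul_of_nonneg_right h3 (sub_nonneg.2 hqa)
  have h5 : p ^ 2 - c ^ 2 = a ^ 2 - q ^ 2 := by linarith
  rw [h5] at h1
  linarith

lemma cosh_norm_add_add_cosh_norm_sub_le {H : Type*} [NormedAddCommGroup H]
    [InnerProductSpace ℝ H] (x y : H) :
    Real.cosh ‖x + y‖ + Real.cosh ‖x - y‖ ≤ 2 * (Real.cosh ‖x‖ * Real.cosh ‖y‖) := by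
  have h := cosh_add_cosh_le_of_sq_add_sq_eq (p := ‖x + y‖) (q := ‖x - y‖) (a := ‖x‖ + ‖y‖)
    (c := ‖x‖ - ‖y‖) (by gcongr; exact norm_add_le x y) (by gcongr; exact norm_sub_le x y)
    (by have := parallelogram_law_with_norm ℝ x y; linarith)
  rw [Real.cosh_add, Real.cosh_sub] at h
  linarith

lemma cosh_le_one_add_sq {z : ℝ} (hz : |z| ≤ 1) : Real.cosh z ≤ 1 + z ^ 2 := by
  have h1 := (abs_le.1 (Real.abs_exp_sub_one_sub_id_le hz)).2
  have h2 := (abs_le.1 (Real.abs_exp_sub_one_sub_id_le (x := -z) (by rwa [abs_neg]))).2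
  rw [Real.cosh_eq]
  linarith

section Product

variable {Ω : Type*} [MeasurableSpace Ω] (μ : Measure Ω) [SigmaFinite μ]

lemma lintegral_pi_succ {n : ℕ} {F : (Fin (n + 1) → Ω) → ENNReal} (hF : Measurable F) :
    ∫⁻ B, F B ∂(Measure.pi fun _ => μ) =
      ∫⁻ B, ∫⁻ ω, F (Fin.cons ω B) ∂μ ∂(Measure.pi fun _ => μ) := by
  have h := (measurePreserving_piFinSuccAbove (fun _ : Fin (n + 1) => μ) 0).symm
  rw [← h.lintegral_comp hF, lintegral_prod_symm]
  · simp [MeasurableEquiv.piFinSuccAbove, Fin.insertNthEquiv]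
  · exact (hF.comp h.measurable).aemeasurable

lemma lintegral_pi_prod_eq_prod_lintegral {n : ℕ} {g : Fin n → Ω → ENNReal}
    (hg : ∀ i, Measurable (g i)) :
    ∫⁻ B, ∏ i, g i (B i) ∂(Measure.pi fun _ => μ) = ∏ i, ∫⁻ ω, g i ω ∂μ := by
  induction n with
  | zero => simp
  | succ n ih =>
    rw [lintegral_pi_succ μ (by fun_prop)]
    simp only [Fin.prod_univ_succ, Fin.cons_zero, Fin.cons_succ]
    have h (B : Fin n → Ω) : ∫⁻ ω, g 0 ω * ∏ i, g i.succ (B i) ∂μ =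
        (∫⁻ ω, g 0 ω ∂μ) * ∏ i, g i.succ (B i) := lintegral_mul_const _ (hg 0)
    simp only [h]
    rw [lintegral_const_mul _ (by fun_prop), ih fun i => hg i.succ]

/-- Pinelis-type bound for sums of independent symmetric random vectors in a Hilbert space. -/
lemma lintegral_cosh_norm_add_sum_le {H : Type*} [NormedAddCommGroup H] [InnerProductSpace ℝ H]
    [MeasurableSpace H] [BorelSpace H] [SecondCountableTopology H]
    [InvolutiveNeg Ω] [MeasurableNeg Ω] [μ.IsNegInvariant] {n : ℕ} {f : Fin n → Ω → H}
    (hf : ∀ i, Measurable (f i)) (hodd : ∀ i ω, f i (-ω) = -f i ω) (x : H) :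
    ∫⁻ B, ENNReal.ofReal (Real.cosh ‖x + ∑ i, f i (B i)‖) ∂(Measure.pi fun _ => μ) ≤
      ENNReal.ofReal (Real.cosh ‖x‖) * ∏ i, ∫⁻ ω, ENNReal.ofReal (Real.cosh ‖f i ω‖) ∂μ := by
  induction n with
  | zero => simp
  | succ n ih =>
    have hcosh : Measurable Real.cosh := Real.continuous_cosh.measurable
    have hstep (z : H) (g : Ω → H) (hg : Measurable g) (hgo : ∀ ω, g (-ω) = -g ω) :
        ∫⁻ ω, ENNReal.ofReal (Real.cosh ‖z + g ω‖) ∂μ ≤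
          ENNReal.ofReal (Real.cosh ‖z‖) * ∫⁻ ω, ENNReal.ofReal (Real.cosh ‖g ω‖) ∂μ := by
      have h1 := lintegral_neg_eq_self (μ := μ) fun ω => ENNReal.ofReal (Real.cosh ‖z + g ω‖)
      have h2 : 2 * ∫⁻ ω, ENNReal.ofReal (Real.cosh ‖z + g ω‖) ∂μ ≤
          2 * (ENNReal.ofReal (Real.cosh ‖z‖) * ∫⁻ ω, ENNReal.ofReal (Real.cosh ‖g ω‖) ∂μ) := by
        rw [two_mul]
        nth_rewrite 2 [← h1]
        rw [← lintegral_add_left (by fun_prop), ← mul_assoc, ← lintegral_const_mul _ (by fun_prop)]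
        refine lintegral_mono fun ω => ?_
        rw [hgo, ← sub_eq_add_neg, ← ENNReal.ofReal_add (Real.cosh_pos _).le (Real.cosh_pos _).le,
          ← ENNReal.ofReal_ofNat, ← ENNReal.ofReal_mul (by norm_num),
          ← ENNReal.ofReal_mul (by have := Real.cosh_pos ‖z‖; positivity), mul_assoc]
        exact ENNReal.ofReal_le_ofReal (cosh_norm_add_add_cosh_norm_sub_le z (g ω))
      exact (ENNReal.mul_le_mul_iff_right (by norm_num) (by norm_num)).1 h2
    rw [lintegral_pi_succ μ (by fun_prop)]
    simp only [Fin.sum_univ_succ, Fin.prod_univ_succ, Fin.cons_zero, Fin.cons_succ]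
    calc _ ≤ ∫⁻ B, ENNReal.ofReal (Real.cosh ‖x + ∑ i, f (Fin.succ i) (B i)‖) *
          ∫⁻ ω, ENNReal.ofReal (Real.cosh ‖f 0 ω‖) ∂μ ∂(Measure.pi fun _ => μ) := by
          refine lintegral_mono fun B => ?_
          refine le_trans (le_of_eq ?_) (hstep _ (f 0) (hf 0) (hodd 0))
          refine lintegral_congr fun ω => ?_
          congr 3
          abel
      _ = _ := lintegral_mul_const _ (by fun_prop)
      _ ≤ _ := mul_le_mul_left (ih (fun i => hf i.succ) fun i => hodd i.succ) _
      _ = _ := by ring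

end Product

/-- Bernstein's inequality for weighted sums of independent copies of a bounded symmetric random
vector in a Hilbert space. -/
lemma measure_norm_sum_ge_le_of_bounded_of_odd {Ω H : Type*} [MeasurableSpace Ω]
    [InvolutiveNeg Ω] [MeasurableNeg Ω] (μ : Measure Ω) [IsProbabilityMeasure μ]
    [μ.IsNegInvariant] [NormedAddCommGroup H] [InnerProductSpace ℝ H] [MeasurableSpace H]
    [BorelSpace H] [SecondCountableTopology H] {T : Ω → H} (hT : Measurable T)
    (hodd : ∀ ω, T (-ω) = -T ω) {R σ M L : ℝ} (hR : ∀ ω, ‖T ω‖ ≤ R) (hσ : 0 ≤ σ)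
    (hvar : ∫⁻ ω, ENNReal.ofReal (‖T ω‖ ^ 2) ∂μ ≤ ENNReal.ofReal (σ ^ 2)) {n : ℕ}
    {v : Fin n → ℝ} (hv : ∀ i, |v i| ≤ M) (hM : 0 ≤ M) (hL : 0 < L)
    (ha : 0 < eucNorm v * σ * √L + M * R * L) :
    (Measure.pi fun _ : Fin n => μ)
        {B | 3 * (eucNorm v * σ * √L + M * R * L) ≤ ‖∑ i, v i • T (B i)‖} ≤
      ENNReal.ofReal (2 * Real.exp (-(2 * L))) := by
  set a := eucNorm v * σ * √L + M * R * L with ha_def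
  have hV0 : 0 ≤ eucNorm v := Real.sqrt_nonneg _
  have hR0 : 0 ≤ R := by
    obtain ⟨ω⟩ := nonempty_of_isProbabilityMeasure μ
    exact (norm_nonneg _).trans (hR ω)
  set c := L / a with hc_def
  have hc : 0 < c := by positivity
  have hca : c * a = L := div_mul_cancel₀ _ ha.ne'
  have hsL : 0 < √L := Real.sqrt_pos.2 hL
  have hssL : √L * √L = L := Real.mul_self_sqrt hL.le
  have hcR : c * (M * R) ≤ 1 := by
    have : c * (M * R) * L ≤ 1 * L := by
      have : 0 ≤ c * (eucNorm v * σ * √L) := by positivity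
      rw [ha_def] at hca
      linarith
    exact le_of_mul_le_mul_right this hL
  have hcV : c * (eucNorm v * σ) ≤ √L := by
    have : c * (eucNorm v * σ) * √L ≤ √L * √L := by
      have : 0 ≤ c * (M * R * L) := by positivity
      rw [ha_def] at hca
      linarith
    exact le_of_mul_le_mul_right this hsL
  have hmgf (i : Fin n) : ∫⁻ ω, ENNReal.ofReal (Real.cosh ‖(c * v i) • T ω‖) ∂μ ≤
      ENNReal.ofReal (Real.exp (c ^ 2 * v i ^ 2 * σ ^ 2)) := by
    calc _ ≤ ∫⁻ ω, (1 + ENNReal.ofReal ((c * v i) ^ 2) * ENNReal.ofReal (‖T ω‖ ^ 2)) ∂μ := by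
          refine lintegral_mono fun ω => ?_
          rw [← ENNReal.ofReal_mul (by positivity), ← ENNReal.ofReal_one,
            ← ENNReal.ofReal_add zero_le_one (by positivity)]
          refine ENNReal.ofReal_le_ofReal ?_
          have hle : |‖(c * v i) • T ω‖| ≤ 1 := by
            rw [abs_norm, norm_smul, Real.norm_eq_abs, abs_mul, abs_of_pos hc, mul_assoc]
            refine le_trans ?_ hcR
            have := hv i
            have := hR ω
            gcongr
          refine (cosh_le_one_add_sq hle).trans_eq ?_
          rw [norm_smul, mul_pow, Real.norm_eq_abs, sq_abs]
      _ = 1 + ENNReal.ofReal ((c * v i) ^ 2) * ∫⁻ ω, ENNReal.ofReal (‖T ω‖ ^ 2) ∂μ := by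
          rw [lintegral_add_left (by fun_prop), lintegral_const_mul _ (by fun_prop)]
          simp
      _ ≤ 1 + ENNReal.ofReal ((c * v i) ^ 2) * ENNReal.ofReal (σ ^ 2) := by gcongr
      _ ≤ _ := by
          rw [← ENNReal.ofReal_mul (by positivity), ← ENNReal.ofReal_one,
            ← ENNReal.ofReal_add zero_le_one (by positivity)]
          refine ENNReal.ofReal_le_ofReal ?_
          have := Real.add_one_le_exp (c ^ 2 * v i ^ 2 * σ ^ 2)
          linarith [mul_pow c (v i) 2]
  have hsq : eucNorm v ^ 2 = ∑ i, v i ^ 2 :=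
    Real.sq_sqrt (Finset.sum_nonneg fun i _ => sq_nonneg _)
  have htotal : ∫⁻ B, ENNReal.ofReal (Real.cosh ‖∑ i, (c * v i) • T (B i)‖)
      ∂(Measure.pi fun _ : Fin n => μ) ≤ ENNReal.ofReal (Real.exp L) := by
    have h := lintegral_cosh_norm_add_sum_le μ (f := fun i ω => (c * v i) • T ω)
      (fun i => hT.const_smul _) (fun i ω => by rw [hodd, smul_neg]) 0
    simp only [zero_add, norm_zero, Real.cosh_zero, ENNReal.ofReal_one, one_mul] at h
    refine h.trans ((Finset.prod_le_prod' fun i _ => hmgf i).trans ?_)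
    rw [← ENNReal.ofReal_prod_of_nonneg fun i _ => (Real.exp_pos _).le, ← Real.exp_sum]
    refine ENNReal.ofReal_le_ofReal (Real.exp_le_exp.2 ?_)
    rw [← Finset.sum_mul, ← Finset.mul_sum, ← hsq, ← hssL]
    calc c ^ 2 * eucNorm v ^ 2 * σ ^ 2 = (c * (eucNorm v * σ)) * (c * (eucNorm v * σ)) := by ring
      _ ≤ √L * √L := by gcongr
  have hsub : {B : Fin n → Ω | 3 * a ≤ ‖∑ i, v i • T (B i)‖} ⊆
      {B | ENNReal.ofReal (Real.exp (3 * L) / 2) ≤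
        ENNReal.ofReal (Real.cosh ‖∑ i, (c * v i) • T (B i)‖)} := by
    intro B hB
    refine ENNReal.ofReal_le_ofReal ?_
    have h1 : 3 * L ≤ ‖∑ i, (c * v i) • T (B i)‖ := by
      simp only [mul_smul, ← Finset.smul_sum]
      rw [norm_smul, Real.norm_eq_abs, abs_of_pos hc, ← hca]
      have := mul_le_mul_of_nonneg_left (show 3 * a ≤ _ from hB) hc.le
      linarith
    have h2 := Real.exp_le_exp.2 h1
    rw [Real.cosh_eq]
    have := Real.exp_pos (-‖∑ i, (c * v i) • T (B i)‖)
    linarith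
  have hmeas : Measurable fun B : Fin n → Ω =>
      ENNReal.ofReal (Real.cosh ‖∑ i, (c * v i) • T (B i)‖) := by
    have hcosh : Measurable Real.cosh := Real.continuous_cosh.measurable
    fun_prop
  refine (measure_mono hsub).trans ((meas_ge_le_lintegral_div hmeas.aemeasurable
    (by simp; positivity) ENNReal.ofReal_ne_top).trans ?_)
  refine (ENNReal.div_le_div_right htotal _).trans ?_
  rw [← ENNReal.ofReal_div_of_pos (by positivity)]
  refine ENNReal.ofReal_le_ofReal (le_of_eq ?_)
  rw [show -(2 * L) = L - 3 * L by ring, Real.exp_sub]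
  field_simp

instance isNegInvariant_gaussianReal_zero (w : NNReal) : (gaussianReal 0 w).IsNegInvariant :=
  ⟨by
    have := gaussianReal_map_neg (μ := 0) (v := w)
    rwa [neg_zero] at this⟩

instance isNegInvariant_gaussVec (k : ℕ) (w : NNReal) : (gaussVec k w).IsNegInvariant := by
  unfold gaussVec
  infer_instance

lemma lintegral_exp_sq_sub_one_gaussianReal_le {w : NNReal} (hw : w ≠ 0) {t : ℝ}
    (ht : |t| ≤ 1 / 4) :
    ∫⁻ x, ENNReal.ofReal (Real.exp (t * (x ^ 2 / w - 1))) ∂(gaussianReal 0 w) ≤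
      ENNReal.ofReal (Real.exp (4 * t ^ 2)) := by
  obtain ⟨ht1, ht2⟩ := abs_le.1 ht
  have hw0 : (0 : ℝ) < w := by positivity
  set b : ℝ := (1 - 2 * t) / (2 * w) with hb_def
  have hb : 0 < b := div_pos (by linarith) (by positivity)
  have hform (x : ℝ) : gaussianPDFReal 0 w x * Real.exp (t * (x ^ 2 / w - 1)) =
      (√(2 * Real.pi * w))⁻¹ * Real.exp (-t) * Real.exp (-b * x ^ 2) := by
    simp only [gaussianPDFReal]
    rw [mul_assoc _ (Real.exp _), mul_assoc _ (Real.exp _), ← Real.exp_add, ← Real.exp_add, hb_def]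
    congr 2
    field_simp
    ring
  rw [gaussianReal_of_var_ne_zero _ hw,
    lintegral_withDensity_eq_lintegral_mul _ (measurable_gaussianPDF 0 w) (by fun_prop)]
  simp only [Pi.mul_apply, gaussianPDF]
  simp_rw [← ENNReal.ofReal_mul (gaussianPDFReal_nonneg 0 w _), hform]
  rw [← ofReal_integral_eq_lintegral_ofReal ((integrable_exp_neg_mul_sq hb).const_mul _)
    (Filter.Eventually.of_forall fun x => by positivity)]
  refine ENNReal.ofReal_le_ofReal ?_
  rw [integral_const_mul, integral_gaussian]
  have h1 : Real.pi / b = (2 * Real.pi * w) * (1 - 2 * t)⁻¹ := by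
    rw [hb_def]
    field_simp
  have hu : Real.exp (-(2 * t) - 2 * (2 * t) ^ 2) ≤ 1 - 2 * t := by
    have h := Real.add_one_le_exp (2 * t + 2 * (2 * t) ^ 2)
    rw [show -(2 * t) - 2 * (2 * t) ^ 2 = -(2 * t + 2 * (2 * t) ^ 2) by ring, Real.exp_neg]
    refine inv_le_of_inv_le₀ (by linarith) (le_trans ?_ h)
    rw [inv_le_iff_one_le_mul₀ (by linarith)]
    nlinarith [mul_nonneg (sq_nonneg t) (by linarith : 0 ≤ 1 - 4 * t)]
  have h2 : √((1 - 2 * t)⁻¹) ≤ Real.exp (t + 4 * t ^ 2) := by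
    rw [Real.sqrt_le_left (Real.exp_pos _).le, ← Real.exp_nat_mul]
    refine inv_le_of_inv_le₀ (Real.exp_pos _) ?_
    rw [← Real.exp_neg]
    refine le_trans (le_of_eq ?_) hu
    push_cast
    ring_nf
  rw [h1, Real.sqrt_mul (by positivity : 0 ≤ 2 * Real.pi * w)]
  calc _ = Real.exp (-t) * √((1 - 2 * t)⁻¹) := by
        have : √(2 * Real.pi * w) ≠ 0 := by positivity
        generalize √(2 * Real.pi * w) = A at this ⊢
        generalize √((1 - 2 * t)⁻¹) = s
        field_simp
    _ ≤ Real.exp (-t) * Real.exp (t + 4 * t ^ 2) := by gcongr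
    _ = _ := by rw [← Real.exp_add]; ring_nf

/-- The deviation of `‖b‖²` from its mean under `N(0, w I_k)`, in units of `√k w`. -/
noncomputable def normSqDev {k : ℕ} (w : NNReal) (b : Fin k → ℝ) : ℝ :=
  ((∑ l, b l ^ 2) / w - k) / √k

@[fun_prop]
lemma measurable_normSqDev {k : ℕ} (w : NNReal) :
    Measurable (normSqDev w : (Fin k → ℝ) → ℝ) := by
  unfold normSqDev
  fun_prop

lemma lintegral_exp_mul_normSqDev_le {k : ℕ} (hk : 1 ≤ k) {w : NNReal} (hw : w ≠ 0) {s : ℝ}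
    (hs : |s| = 1 / 4) :
    ∫⁻ b, ENNReal.ofReal (Real.exp (s * normSqDev w b)) ∂(gaussVec k w) ≤
      ENNReal.ofReal (Real.exp (1 / 4)) := by
  have hk1 : (1 : ℝ) ≤ k := by exact_mod_cast hk
  have hk2 : 1 ≤ √(k : ℝ) := Real.one_le_sqrt.2 hk1
  have hform (b : Fin k → ℝ) : ENNReal.ofReal (Real.exp (s * normSqDev w b)) =
      ∏ l, ENNReal.ofReal (Real.exp (s / √k * (b l ^ 2 / w - 1))) := by
    rw [← ENNReal.ofReal_prod_of_nonneg fun i _ => (Real.exp_pos _).le, ← Real.exp_sum,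
      ← Finset.mul_sum, Finset.sum_sub_distrib, ← Finset.sum_div]
    simp only [normSqDev, Finset.sum_const, Finset.card_univ, Fintype.card_fin, nsmul_eq_mul,
      mul_one]
    ring_nf
  simp_rw [hform]
  have hsk : |s / √k| ≤ 1 / 4 := by
    rw [abs_div, hs, abs_of_pos (by positivity : 0 < √(k : ℝ))]
    exact div_le_self (by norm_num) hk2
  rw [gaussVec, lintegral_pi_prod_eq_prod_lintegral (gaussianReal 0 w)
    (g := fun _ x => ENNReal.ofReal (Real.exp (s / √k * (x ^ 2 / w - 1)))) fun l => by fun_prop]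
  refine (Finset.prod_le_prod' fun l _ =>
    lintegral_exp_sq_sub_one_gaussianReal_le hw hsk).trans ?_
  rw [Finset.prod_const, ← ENNReal.ofReal_pow (Real.exp_pos _).le, ← Real.exp_nat_mul]
  refine ENNReal.ofReal_le_ofReal (Real.exp_le_exp.2 (le_of_eq ?_))
  rw [Finset.card_univ, Fintype.card_fin, div_pow, Real.sq_sqrt (by positivity), ← sq_abs s, hs]
  field_simp

lemma lintegral_exp_abs_normSqDev_le {k : ℕ} (hk : 1 ≤ k) {w : NNReal} (hw : w ≠ 0) :
    ∫⁻ b, ENNReal.ofReal (Real.exp (|normSqDev w b| / 4)) ∂(gaussVec k w) ≤ 3 := by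
  have h1 := lintegral_exp_mul_normSqDev_le hk hw (s := 1 / 4) (by norm_num)
  have h2 := lintegral_exp_mul_normSqDev_le hk hw (s := -(1 / 4)) (by norm_num)
  have h3 := (abs_le.1 (Real.abs_exp_sub_one_sub_id_le (x := 1 / 4) (by norm_num))).2
  calc _ ≤ ∫⁻ b, (ENNReal.ofReal (Real.exp (1 / 4 * normSqDev w b)) +
        ENNReal.ofReal (Real.exp (-(1 / 4) * normSqDev w b))) ∂(gaussVec k w) := by
        refine lintegral_mono fun b => ?_
        rw [← ENNReal.ofReal_add (Real.exp_pos _).le (Real.exp_pos _).le]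
        refine ENNReal.ofReal_le_ofReal ?_
        have e1 := Real.exp_pos (1 / 4 * normSqDev w b)
        have e2 := Real.exp_pos (-(1 / 4) * normSqDev w b)
        rcases abs_cases (normSqDev w b) with ⟨h, _⟩ | ⟨h, _⟩
        · rw [h, show normSqDev w b / 4 = 1 / 4 * normSqDev w b by ring]
          linarith
        · rw [h, show -normSqDev w b / 4 = -(1 / 4) * normSqDev w b by ring]
          linarith
    _ ≤ ENNReal.ofReal (Real.exp (1 / 4)) + ENNReal.ofReal (Real.exp (1 / 4)) := by
        rw [lintegral_add_left (by fun_prop)]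
        exact add_le_add h1 h2
    _ ≤ ENNReal.ofReal 3 := by
        rw [← ENNReal.ofReal_add (Real.exp_pos _).le (Real.exp_pos _).le]
        exact ENNReal.ofReal_le_ofReal (by linarith)
    _ = 3 := by simp

lemma measure_abs_normSqDev_ge_le {k : ℕ} (hk : 1 ≤ k) {w : NNReal} (hw : w ≠ 0) (s : ℝ) :
    gaussVec k w {b | s ≤ |normSqDev w b|} ≤ ENNReal.ofReal (3 * Real.exp (-(s / 4))) := by
  have hsub : {b : Fin k → ℝ | s ≤ |normSqDev w b|} ⊆ {b | ENNReal.ofReal (Real.exp (s / 4)) ≤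
      ENNReal.ofReal (Real.exp (|normSqDev w b| / 4))} := by
    intro b hb
    have hb' : s ≤ |normSqDev w b| := hb
    exact ENNReal.ofReal_le_ofReal (Real.exp_le_exp.2 (by linarith))
  refine (measure_mono hsub).trans ((meas_ge_le_lintegral_div (by fun_prop)
    (by simp; positivity) ENNReal.ofReal_ne_top).trans ?_)
  refine (ENNReal.div_le_div_right (lintegral_exp_abs_normSqDev_le hk hw) _).trans ?_
  rw [show (3 : ENNReal) = ENNReal.ofReal 3 by simp, ← ENNReal.ofReal_div_of_pos (by positivity),
    Real.exp_neg, div_eq_mul_inv]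

/-- The vector `(‖b‖² - k w) b`, set to zero where `‖b‖²` deviates from its mean by more than
`s √k w`. -/
noncomputable def truncVec {k : ℕ} (w : NNReal) (s : ℝ) (b : Fin k → ℝ) :
    EuclideanSpace ℝ (Fin k) :=
  if |normSqDev w b| ≤ s then ((∑ l, b l ^ 2) - k * w) • WithLp.toLp 2 b else 0

lemma measurable_truncVec {k : ℕ} (w : NNReal) (s : ℝ) :
    Measurable (truncVec w s : (Fin k → ℝ) → EuclideanSpace ℝ (Fin k)) := by
  unfold truncVec
  refine Measurable.ite (measurableSet_le (by fun_prop) measurable_const) ?_ measurable_const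
  fun_prop

lemma truncVec_neg {k : ℕ} (w : NNReal) (s : ℝ) (b : Fin k → ℝ) :
    truncVec w s (-b) = -truncVec w s b := by
  have h : normSqDev w (-b) = normSqDev w b := by simp [normSqDev]
  unfold truncVec
  rw [h]
  split_ifs <;> simp

lemma norm_truncVec_sq_le {k : ℕ} (hk : 1 ≤ k) {w : NNReal} (hw : w ≠ 0) (s : ℝ)
    (b : Fin k → ℝ) :
    ‖truncVec w s b‖ ^ 2 ≤ k ^ 2 * w ^ 3 * (|normSqDev w b| ^ 2 * (1 + |normSqDev w b|)) := by
  have hw0 : (0 : ℝ) < w := by positivity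
  have hk1 : (1 : ℝ) ≤ k := by exact_mod_cast hk
  have hk2 : 1 ≤ √(k : ℝ) := Real.one_le_sqrt.2 hk1
  have hk3 : √(k : ℝ) ^ 2 = k := Real.sq_sqrt (by positivity)
  unfold truncVec
  split_ifs
  · have h1 : ∑ l, b l ^ 2 = w * (k + √k * normSqDev w b) := by
      unfold normSqDev
      field_simp
      ring
    have h2 : ‖(WithLp.toLp 2 b : EuclideanSpace ℝ (Fin k))‖ ^ 2 = ∑ l, b l ^ 2 := by
      rw [EuclideanSpace.real_norm_sq_eq]
    rw [norm_smul, mul_pow, h2, Real.norm_eq_abs, sq_abs, h1, sq_abs]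
    have h3 : w * (k + √k * normSqDev w b) ≤ w * (k * (1 + |normSqDev w b|)) := by
      have : √k * normSqDev w b ≤ k * |normSqDev w b| := by
        have h5 : √k * normSqDev w b ≤ √k * |normSqDev w b| :=
          mul_le_mul_of_nonneg_left (le_abs_self _) (by positivity)
        have h6 : √(k : ℝ) ≤ k := by nlinarith
        exact h5.trans (mul_le_mul_of_nonneg_right h6 (abs_nonneg _))
      rw [mul_one_add]
      gcongr
    have h4 : (w * (k + √k * normSqDev w b) - k * w) ^ 2 = k * w ^ 2 * normSqDev w b ^ 2 := by
      linear_combination (w : ℝ) ^ 2 * normSqDev w b ^ 2 * hk3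
    rw [h4]
    calc _ ≤ k * w ^ 2 * normSqDev w b ^ 2 * (w * (k * (1 + |normSqDev w b|))) := by gcongr
      _ = _ := by ring
  · rw [norm_zero, zero_pow two_ne_zero]
    positivity

lemma lintegral_norm_truncVec_sq_le {k : ℕ} (hk : 1 ≤ k) {w : NNReal} (hw : w ≠ 0) (s : ℝ) :
    ∫⁻ b, ENNReal.ofReal (‖truncVec w s b‖ ^ 2) ∂(gaussVec k w) ≤
      ENNReal.ofReal (1248 * (k ^ 2 * w ^ 3)) := by
  calc _ ≤ ∫⁻ b, ENNReal.ofReal (k ^ 2 * w ^ 3 * 416) *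
        ENNReal.ofReal (Real.exp (|normSqDev w b| / 4)) ∂(gaussVec k w) := by
        refine lintegral_mono fun b => ?_
        rw [← ENNReal.ofReal_mul (by positivity)]
        refine ENNReal.ofReal_le_ofReal ((norm_truncVec_sq_le hk hw s b).trans ?_)
        rw [mul_assoc _ (416 : ℝ)]
        refine mul_le_mul_of_nonneg_left ?_ (by positivity)
        have hx := abs_nonneg (normSqDev w b)
        generalize |normSqDev w b| = x at hx
        have h2 := Real.pow_div_factorial_le_exp (x := x / 4) (by positivity) 2
        have h3 := Real.pow_div_factorial_le_exp (x := x / 4) (by positivity) 3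
        norm_num [Nat.factorial] at h2 h3
        linarith
    _ = ENNReal.ofReal (k ^ 2 * w ^ 3 * 416) *
        ∫⁻ b, ENNReal.ofReal (Real.exp (|normSqDev w b| / 4)) ∂(gaussVec k w) :=
        lintegral_const_mul _ (by fun_prop)
    _ ≤ ENNReal.ofReal (k ^ 2 * w ^ 3 * 416) * ENNReal.ofReal 3 := by
        gcongr
        simpa using lintegral_exp_abs_normSqDev_le hk hw
    _ = _ := by
        rw [← ENNReal.ofReal_mul (by positivity)]
        ring_nf

lemma rpow_three_halves_sq {x : ℝ} (hx : 0 ≤ x) : (x ^ (3 / 2 : ℝ)) ^ 2 = x ^ 3 := by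
  rw [← Real.rpow_mul_natCast hx, ← Real.rpow_natCast x 3]
  norm_num

lemma norm_truncVec_le {k : ℕ} (hk : 1 ≤ k) {w : NNReal} (hw : w ≠ 0) {L : ℝ} (hL : 1 / 2 ≤ L)
    (b : Fin k → ℝ) :
    ‖truncVec w (16 * L) b‖ ≤ k * w ^ (3 / 2 : ℝ) * (80 * L ^ (3 / 2 : ℝ)) := by
  have hw0 : (0 : ℝ) < w := by positivity
  have hL0 : 0 < L := by linarith
  have hw3 := rpow_three_halves_sq hw0.le
  have hL3 := rpow_three_halves_sq hL0.le
  by_cases h : |normSqDev w b| ≤ 16 * L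
  · refine abs_le_of_sq_le_sq' ?_ (by positivity) |>.2
    refine (norm_truncVec_sq_le hk hw _ b).trans ?_
    rw [mul_pow, mul_pow, mul_pow, hw3, hL3]
    refine mul_le_mul_of_nonneg_left ?_ (by positivity)
    calc _ ≤ (16 * L) ^ 2 * (1 + 16 * L) := by gcongr
      _ ≤ (16 * L) ^ 2 * (18 * L) := by gcongr; linarith
      _ ≤ _ := by nlinarith [pow_pos hL0 3]
  · rw [truncVec, if_neg h, norm_zero]
    positivity

lemma eucNorm_eq_norm {k : ℕ} (v : Fin k → ℝ) :
    eucNorm v = ‖(WithLp.toLp 2 v : EuclideanSpace ℝ (Fin k))‖ := by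
  simp [eucNorm, EuclideanSpace.norm_eq]

lemma abs_le_supNorm {k : ℕ} (v : Fin k → ℝ) (i : Fin k) : |v i| ≤ supNorm v :=
  le_ciSup (f := fun i => |v i|) (Set.finite_range _).bddAbove i

lemma supNorm_nonneg {k : ℕ} (v : Fin k → ℝ) : 0 ≤ supNorm v :=
  Real.iSup_nonneg fun _ => abs_nonneg _

/-- with `b_1, …, b_N` i.i.d. `N(0, (1/N) I_{n-1})` and `v ∈ ℝ^N` fixed, there
is a universal constant `C > 0` such that for any `δ ∈ (0,1)`, with probability at least
`1 - δ`, `‖∑_i (‖b_i‖² - (n-1)/N) v_i b_i‖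
  ≤ C (‖v‖ n √(log(N/δ))/N^{3/2} + ‖v‖_∞ n log^{5/2}(N/δ)/N^{3/2})`. -/
theorem stmt_3 :
    ∃ C : ℝ, 0 < C ∧
      ∀ (N n : ℕ) (v : Fin N → ℝ) (δ : ℝ), 1 ≤ n → n ≤ N → 0 < δ → δ < 1 →
        ENNReal.ofReal (1 - δ) ≤
          (iidGaussVec N (n - 1) ((N : NNReal))⁻¹)
            {B | eucNorm
                (fun j => ∑ i, ((∑ l, (B i l) ^ 2) - ((n : ℝ) - 1) / N) * v i * B i j)
              ≤ C * (eucNorm v * n * Real.sqrt (Real.log (N / δ)) / (N : ℝ) ^ ((3 : ℝ) / 2)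
                  + supNorm v * n * (Real.log (N / δ)) ^ ((5 : ℝ) / 2)
                      / (N : ℝ) ^ ((3 : ℝ) / 2))} := by
  refine ⟨240, by norm_num, fun N n v δ hn hnN hδ0 hδ1 => ?_⟩
  obtain ⟨k, rfl⟩ : ∃ k, n = k + 1 := ⟨n - 1, by omega⟩
  simp only [Nat.cast_add, Nat.cast_one, add_sub_cancel_right]
  have hN1 : (1 : ℝ) ≤ N := by exact_mod_cast hn.trans hnN
  have hN0 : (0 : ℝ) < N := by linarith
  set L := Real.log (N / δ) with hL_def
  have hL0 : 0 ≤ L := Real.log_nonneg (by rw [one_le_div hδ0]; linarith)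
  have hV0 : 0 ≤ eucNorm v := Real.sqrt_nonneg _
  have hM0 := supNorm_nonneg v
  have hprob : IsProbabilityMeasure (iidGaussVec N k ((N : NNReal))⁻¹) := by
    unfold iidGaussVec
    infer_instance
  set r : ℝ := 240 * (eucNorm v * (k + 1) * √L / (N : ℝ) ^ ((3 : ℝ) / 2)
    + supNorm v * (k + 1) * L ^ ((5 : ℝ) / 2) / (N : ℝ) ^ ((3 : ℝ) / 2)) with hr_def
  have hr0 : 0 ≤ r := by positivity
  have hdet (h : ∀ B : Fin N → Fin k → ℝ, eucNorm
      (fun j => ∑ i, ((∑ l, (B i l) ^ 2) - (k : ℝ) / N) * v i * B i j) = 0) :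
      ENNReal.ofReal (1 - δ) ≤ (iidGaussVec N k ((N : NNReal))⁻¹)
        {B | eucNorm
          (fun j => ∑ i, ((∑ l, (B i l) ^ 2) - (k : ℝ) / N) * v i * B i j) ≤ r} := by
    simp only [h, hr0, Set.ofPred_true, measure_univ]
    exact ENNReal.ofReal_le_one.2 (by linarith)
  rcases Nat.eq_zero_or_pos k with rfl | hk
  · exact hdet fun B => by simp [eucNorm]
  by_cases hv : eucNorm v = 0
  · have hv0 (i : Fin N) : v i = 0 := by
      rw [eucNorm_eq_norm, norm_eq_zero] at hv
      simpa using congrFun (congrArg WithLp.ofLp hv) i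
    exact hdet fun B => by simp [eucNorm, hv0]
  have hN2 : (2 : ℝ) ≤ N := by exact_mod_cast (by omega : 2 ≤ N)
  have hexpL : Real.exp (-L) = δ / N := by
    rw [Real.exp_neg, hL_def, Real.exp_log (by positivity), inv_div]
  have hlog2 : Real.log 2 ≤ L := by
    refine Real.log_le_log (by norm_num) ?_
    rw [le_div_iff₀ hδ0]
    nlinarith
  have hexp_half : Real.exp (-L) ≤ 1 / 2 := by
    rw [hexpL, div_le_iff₀ hN0]
    linarith
  have hL2 : 1 / 2 ≤ L := by linarith [Real.log_two_gt_d9]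
  set w : NNReal := ((N : NNReal))⁻¹ with hw_def
  have hw : w ≠ 0 := by
    rw [hw_def]
    have : (N : NNReal) ≠ 0 := by exact_mod_cast (by omega : N ≠ 0)
    exact inv_ne_zero this
  have hwN : (w : ℝ) = (N : ℝ)⁻¹ := by simp [hw_def]
  have hw0 : (0 : ℝ) < w := by positivity
  have hw3 := rpow_three_halves_sq hw0.le
  have hw4 : (w : ℝ) ^ (3 / 2 : ℝ) = ((N : ℝ) ^ ((3 : ℝ) / 2))⁻¹ := by
    rw [hwN, Real.inv_rpow hN0.le]
  have hV : 0 < eucNorm v := lt_of_le_of_ne hV0 (Ne.symm hv)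
  have hk0 : (0 : ℝ) < k := by exact_mod_cast hk
  set κ : ℝ := k * (w : ℝ) ^ (3 / 2 : ℝ) with hκ_def
  have hκ : 0 < κ := by positivity
  have hLpow : L ^ ((5 : ℝ) / 2) = L ^ (3 / 2 : ℝ) * L := by
    rw [← Real.rpow_add_one (by linarith)]
    norm_num
  set a := eucNorm v * (80 * κ) * √L + supNorm v * (κ * (80 * L ^ (3 / 2 : ℝ))) * L with ha_def
  have ha : 0 < a := by
    have : 0 < √L := Real.sqrt_pos.2 (by linarith)
    positivity
  have har : 3 * a ≤ r := by
    have hkk : κ ≤ (k + 1) * (w : ℝ) ^ (3 / 2 : ℝ) := by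
      rw [hκ_def]
      gcongr
      linarith
    calc 3 * a = 240 * ((eucNorm v * √L + supNorm v * L ^ ((5 : ℝ) / 2)) * κ) := by
          rw [ha_def, hLpow]
          ring
      _ ≤ 240 * ((eucNorm v * √L + supNorm v * L ^ ((5 : ℝ) / 2)) *
          ((k + 1) * (w : ℝ) ^ (3 / 2 : ℝ))) := by gcongr
      _ = r := by
          rw [hr_def, hw4]
          ring
  have hbern := measure_norm_sum_ge_le_of_bounded_of_odd (gaussVec k w)
    (measurable_truncVec w (16 * L)) (truncVec_neg w (16 * L)) (norm_truncVec_le hk hw hL2)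
    (σ := 80 * κ) (by positivity)
    ((lintegral_norm_truncVec_sq_le hk hw _).trans (ENNReal.ofReal_le_ofReal (by
      rw [mul_pow, hκ_def, mul_pow, hw3]
      gcongr
      norm_num)))
    (abs_le_supNorm v) hM0 (by linarith : 0 < L) ha
  have hdev (i : Fin N) : (iidGaussVec N k w) {B | 16 * L ≤ |normSqDev w (B i)|} ≤
      ENNReal.ofReal (3 * Real.exp (-(4 * L))) := by
    have h := measurePreserving_eval (fun _ : Fin N => gaussVec k w) i
    have hm : MeasurableSet {b : Fin k → ℝ | 16 * L ≤ |normSqDev w b|} :=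
      measurableSet_le measurable_const (by fun_prop)
    refine le_trans (le_of_eq (h.measure_preimage hm.nullMeasurableSet)) ?_
    refine (measure_abs_normSqDev_ge_le hk hw _).trans_eq ?_
    congr 4
    ring
  set G := {B : Fin N → Fin k → ℝ | eucNorm
    (fun j => ∑ i, ((∑ l, (B i l) ^ 2) - (k : ℝ) / N) * v i * B i j) ≤ r} with hG
  have hcover : (Set.univ : Set (Fin N → Fin k → ℝ)) ⊆
      G ∪ ((⋃ i, {B | 16 * L ≤ |normSqDev w (B i)|}) ∪
        {B | 3 * a ≤ ‖∑ i, v i • truncVec w (16 * L) (B i)‖}) := by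
    intro B _
    by_contra hB
    simp only [Set.mem_union, Set.mem_iUnion, Set.mem_ofPred_eq, not_or, not_exists, not_le, hG]
      at hB
    obtain ⟨h1, h2, h3⟩ := hB
    refine absurd ((h1.trans_le ?_).trans h3) (not_lt.2 har)
    rw [eucNorm_eq_norm]
    refine le_of_eq (congrArg _ ?_)
    ext j
    simp only [truncVec, (h2 _).le, if_true, WithLp.ofLp_sum, WithLp.ofLp_smul, Finset.sum_apply,
      Pi.smul_apply, smul_eq_mul, hwN]
    exact Finset.sum_congr rfl fun i _ => by ring
  have hbad : (iidGaussVec N k w) ((⋃ i, {B | 16 * L ≤ |normSqDev w (B i)|}) ∪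
      {B | 3 * a ≤ ‖∑ i, v i • truncVec w (16 * L) (B i)‖}) ≤ ENNReal.ofReal δ := by
    calc _ ≤ ∑ _i : Fin N, ENNReal.ofReal (3 * Real.exp (-(4 * L))) +
          ENNReal.ofReal (2 * Real.exp (-(2 * L))) := by
          refine (measure_union_le _ _).trans (add_le_add ?_ hbern)
          exact (measure_iUnion_fintype_le _ _).trans (Finset.sum_le_sum fun i _ => hdev i)
      _ = ENNReal.ofReal (N * (3 * Real.exp (-(4 * L))) + 2 * Real.exp (-(2 * L))) := by
          rw [ENNReal.ofReal_add (by positivity) (by positivity), ENNReal.ofReal_mul hN0.le]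
          simp
      _ ≤ _ := by
          refine ENNReal.ofReal_le_ofReal ?_
          have e4 : Real.exp (-(4 * L)) = Real.exp (-L) ^ 4 := by
            rw [← Real.exp_nat_mul]
            ring_nf
          have e2 : Real.exp (-(2 * L)) = Real.exp (-L) ^ 2 := by
            rw [← Real.exp_nat_mul]
            ring_nf
          have hx0 := Real.exp_pos (-L)
          have hδ : δ = N * Real.exp (-L) := by
            rw [hexpL]
            field_simp
          rw [e4, e2, hδ]
          generalize Real.exp (-L) = x at hx0 hexp_half
          have hx3 : x ^ 3 ≤ (1 / 2) ^ 3 := by gcongr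
          have h1 : N * (3 * x ^ 4) ≤ N * x * (3 / 8) := by
            have := mul_le_mul_of_nonneg_left hx3 (by positivity : 0 ≤ 3 * (N * x))
            linarith
          have h2 : 2 * x ^ 2 ≤ x := by nlinarith
          have h3 : 2 * x ≤ N * x := by gcongr
          have : 0 < N * x := by positivity
          linarith
  have htotal : (1 : ENNReal) ≤ (iidGaussVec N k w) G + ENNReal.ofReal δ := by
    rw [← measure_univ (μ := iidGaussVec N k w)]
    exact (measure_mono hcover).trans ((measure_union_le _ _).trans (by gcongr))
  rw [ENNReal.ofReal_sub _ hδ0.le, ENNReal.ofReal_one]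
  exact tsub_le_iff_right.2 htotal
end

section
/- Let b_1,…,b_N be i.i.d. N(0, (1/N) I_{n−1}) Gaussian vectors and v ∈ ℝ^N a fixed vector. There is a universal constant C > 0 such that for any δ ∈ (0,1), with probability at least 1−δ, ‖Σ_{i=1}^N v_i² b_i b_iᵀ − (1/N) I_{n−1}‖ ≤ C( (√(n·log(N/δ))/N)·‖v‖₄² + ((n·log(N/δ) + log²(N/δ))/N)·‖v‖_∞² ) + |‖v‖² − 1|/N, where ‖·‖ on matrices denotes the spectral norm. -/
open MeasureTheory ProbabilityTheory Matrix

/-- ℓ_p norm of a vector in `ℝ^k`. -/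
noncomputable def lpNorm {k : ℕ} (p : ℝ) (v : Fin k → ℝ) : ℝ := (∑ i, |v i| ^ p) ^ (1 / p)

/-- Spectral (ℓ₂ operator) norm of a real matrix. -/
noncomputable def specNorm {m k : ℕ} (M : Matrix (Fin m) (Fin k) ℝ) : ℝ :=
  ‖LinearMap.toContinuousLinearMap (Matrix.toEuclideanLin M)‖

/-- The moment bound `(1 - u)⁻¹ ≤ exp (u + u²)` near zero. -/
lemma inv_one_sub_le_exp {u : ℝ} (hu : |u| ≤ 1 / 2) : (1 - u)⁻¹ ≤ Real.exp (u + u ^ 2) := by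
  obtain ⟨h1, h2⟩ := abs_le.mp hu
  rw [inv_le_iff_one_le_mul₀ (by linarith)]
  rcases le_total 0 u with h | h
  · have h3 := Real.quadratic_le_exp_of_nonneg (x := u + u ^ 2) (by positivity)
    have h4 : 1 ≤ (1 + (u + u ^ 2) + (u + u ^ 2) ^ 2 / 2) * (1 - u) := by
      have : 0 ≤ (1 - u) * (1 + u) ^ 2 / 2 - u := by nlinarith
      nlinarith [mul_nonneg (sq_nonneg u) this]
    nlinarith
  · have h3 := Real.abs_exp_sub_one_sub_id_le (x := -(u + u ^ 2))
      (abs_le.mpr ⟨by nlinarith, by nlinarith⟩)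
    have h4 : Real.exp (-(u + u ^ 2)) ≤ 1 - u := by
      have := (abs_le.mp h3).2
      nlinarith [mul_nonneg (sq_nonneg u) (neg_nonneg.mpr h)]
    calc (1 : ℝ) = Real.exp (u + u ^ 2) * Real.exp (-(u + u ^ 2)) := by
          rw [← Real.exp_add]; simp
      _ ≤ _ := by gcongr

lemma gaussianPDFReal_mul_exp_mul_sq_sub {w : NNReal} (hw : w ≠ 0) (a y : ℝ) :
    gaussianPDFReal 0 w y * Real.exp (a * (y ^ 2 - w))
      = ((√(2 * Real.pi * w))⁻¹ * Real.exp (-(a * w))) *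
        Real.exp (-(1 / (2 * (w : ℝ)) - a) * y ^ 2) := by
  have hw' : (0 : ℝ) < w := by positivity
  rw [gaussianPDFReal, mul_assoc (√(2 * Real.pi * w))⁻¹, mul_assoc (√(2 * Real.pi * w))⁻¹,
    ← Real.exp_add, ← Real.exp_add]
  congr 2
  field_simp
  ring

lemma integrable_exp_mul_sq_sub_gaussianReal {w : NNReal} (hw : w ≠ 0) {a : ℝ}
    (ha : |a| * w ≤ 1 / 4) :
    Integrable (fun y : ℝ => Real.exp (a * (y ^ 2 - w))) (gaussianReal 0 w) := by
  have hw' : (0 : ℝ) < w := by positivity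
  have hb : 0 < 1 / (2 * (w : ℝ)) - a := by
    rw [sub_pos, lt_div_iff₀ (by positivity)]
    nlinarith [le_abs_self a]
  rw [gaussianReal_of_var_ne_zero _ hw]
  rw [integrable_withDensity_iff_integrable_smul' (by fun_prop)
    (ae_of_all _ fun _ => gaussianPDF_lt_top)]
  have := ((integrable_exp_neg_mul_sq hb).const_mul ((√(2 * Real.pi * w))⁻¹ * Real.exp (-(a * w))))
  refine this.congr (ae_of_all _ fun y => ?_)
  simp only [toReal_gaussianPDF, smul_eq_mul]
  exact (gaussianPDFReal_mul_exp_mul_sq_sub hw a y).symm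

/-- Exponential moments of a centred squared Gaussian. -/
lemma integral_exp_mul_sq_sub_gaussianReal_le {w : NNReal} (hw : w ≠ 0) {a : ℝ}
    (ha : |a| * w ≤ 1 / 4) :
    ∫ y, Real.exp (a * (y ^ 2 - w)) ∂(gaussianReal 0 w) ≤ Real.exp (2 * (a * w) ^ 2) := by
  have hw' : (0 : ℝ) < w := by positivity
  have hb : 0 < 1 / (2 * (w : ℝ)) - a := by
    rw [sub_pos, lt_div_iff₀ (by positivity)]
    nlinarith [le_abs_self a]
  have hu : |2 * (a * w)| ≤ 1 / 2 := by
    rw [abs_mul, abs_mul, abs_of_pos hw', abs_two]; linarith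
  have key : ∫ y, Real.exp (a * (y ^ 2 - w)) ∂(gaussianReal 0 w)
      = Real.exp (-(a * w)) * √((1 - 2 * (a * w))⁻¹) := by
    rw [integral_gaussianReal_eq_integral_smul hw]
    simp_rw [smul_eq_mul, gaussianPDFReal_mul_exp_mul_sq_sub hw]
    rw [integral_const_mul, integral_gaussian, mul_comm (√(2 * Real.pi * w))⁻¹, mul_assoc,
      ← Real.sqrt_inv, ← Real.sqrt_mul (by positivity)]
    congr 2
    have h1 : 1 - 2 * (a * w) ≠ 0 := by linarith [(abs_le.mp hu).2]
    have h2 : (1 : ℝ) / (2 * w) - a = (1 - 2 * (a * w)) / (2 * w) := by field_simp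
    rw [h2]
    field_simp
  rw [key]
  have h3 : √((1 - 2 * (a * w))⁻¹) ≤ Real.exp (a * w + 2 * (a * w) ^ 2) := by
    rw [Real.sqrt_le_left (Real.exp_pos _).le, ← Real.exp_nat_mul]
    refine (inv_one_sub_le_exp hu).trans (Real.exp_le_exp.mpr ?_)
    push_cast
    nlinarith
  calc _ ≤ Real.exp (-(a * w)) * Real.exp (a * w + 2 * (a * w) ^ 2) := by gcongr
    _ = _ := by rw [← Real.exp_add]; congr 1; ring

lemma gaussianReal_pi_sum_sq_tail_upper {N : ℕ} {w : NNReal} (hw : w ≠ 0) (a : Fin N → ℝ) {b t : ℝ}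
    (hab : ∀ i, |a i| ≤ b) (hb : 0 ≤ b) (ht : 0 < t) :
    (Measure.pi fun _ : Fin N => gaussianReal 0 w).real
      {y | 12 * w * (√((∑ i, a i ^ 2) * t) + b * t) < ∑ i, a i * (y i ^ 2 - w)}
      ≤ Real.exp (-t) := by
  have hw' : (0 : ℝ) < w := by positivity
  set V := ∑ i, a i ^ 2 with hV
  have hV0 : 0 ≤ V := by positivity
  rcases hV0.eq_or_lt with h0 | hpos
  · have ha : ∀ i, a i = 0 := fun i => by
      have := (Finset.sum_eq_zero_iff_of_nonneg (fun i _ => sq_nonneg (a i))).mp h0.symm i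
        (Finset.mem_univ i)
      simpa using this
    have hemp : {y : Fin N → ℝ | 12 * w * (√(V * t) + b * t) < ∑ i, a i * (y i ^ 2 - w)} = ∅ := by
      ext y
      simp only [ha, zero_mul, Finset.sum_const_zero, Set.mem_ofPred_eq, Set.mem_empty_iff_false,
        iff_false, not_lt]
      positivity
    rw [hemp]; simp [Real.exp_nonneg]
  set D := √(V / t) + 4 * b with hD
  have hsq : 0 < √(V / t) := Real.sqrt_pos.mpr (by positivity)
  have hDpos : 0 < D := by positivity
  set l := (D * w)⁻¹ with hl
  have hlpos : 0 < l := by positivity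
  have hlw : l * w = D⁻¹ := by rw [hl]; field_simp
  have hal : ∀ i, |l * a i| * w ≤ 1 / 4 := by
    intro i
    rw [abs_mul, abs_of_pos hlpos, mul_right_comm, hlw, inv_mul_le_iff₀ hDpos]
    linarith [hab i]
  have hint : Integrable (fun y : Fin N → ℝ => Real.exp (l * ∑ i, a i * (y i ^ 2 - w)))
      (Measure.pi fun _ : Fin N => gaussianReal 0 w) := by
    have := Integrable.fintype_prod (μ := fun _ : Fin N => gaussianReal 0 w)
      (fun i => integrable_exp_mul_sq_sub_gaussianReal hw (hal i))
    refine this.congr (ae_of_all _ fun y => ?_)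
    simp only
    rw [← Real.exp_sum, Finset.mul_sum]
    simp only [mul_assoc]
  have hmgf : mgf (fun y : Fin N → ℝ => ∑ i, a i * (y i ^ 2 - w))
      (Measure.pi fun _ : Fin N => gaussianReal 0 w) l ≤ Real.exp (2 * (l * w) ^ 2 * V) := by
    have h1 : mgf (fun y : Fin N → ℝ => ∑ i, a i * (y i ^ 2 - w))
      (Measure.pi fun _ : Fin N => gaussianReal 0 w) l
        = ∏ i, ∫ y, Real.exp (l * a i * (y ^ 2 - w)) ∂(gaussianReal 0 w) := by
      rw [← integral_fintype_prod_eq_prod (𝕜 := ℝ)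
        (fun (i : Fin N) (y : ℝ) => Real.exp (l * a i * (y ^ 2 - w)))]
      refine integral_congr_ae (ae_of_all _ fun y => ?_)
      simp only
      rw [← Real.exp_sum, Finset.mul_sum]
      simp only [mul_assoc]
    rw [h1]
    calc _ ≤ ∏ i, Real.exp (2 * (l * a i * w) ^ 2) :=
          Finset.prod_le_prod (fun i _ => integral_nonneg fun _ => (Real.exp_pos _).le)
            fun i _ => integral_exp_mul_sq_sub_gaussianReal_le hw (hal i)
      _ = _ := by
          rw [← Real.exp_sum, hV, Finset.mul_sum]
          congr 1
          exact Finset.sum_congr rfl fun i _ => by ring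
  have hch := measure_ge_le_exp_mul_mgf (12 * w * (√(V * t) + b * t)) hlpos.le hint
  refine (measureReal_mono (fun y hy => ?_)).trans (hch.trans ?_)
  · exact (Set.mem_ofPred_eq ▸ hy : _ < _).le
  refine (mul_le_mul_of_nonneg_left hmgf (Real.exp_pos _).le).trans ?_
  rw [← Real.exp_add]
  refine Real.exp_le_exp.mpr ?_
  have hs : √(V * t) = √(V / t) * t := by
    rw [show V * t = V / t * t ^ 2 by field_simp, Real.sqrt_mul (by positivity),
      Real.sqrt_sq ht.le]
  have hVt : V = √(V / t) ^ 2 * t := by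
    rw [Real.sq_sqrt (by positivity)]; field_simp
  have e1 : l * (12 * w * (√(V * t) + b * t)) = 12 * t * ((√(V / t) + b) * D⁻¹) := by
    rw [← hlw, hs]; ring
  have e2 : 1 / 4 ≤ (√(V / t) + b) * D⁻¹ := by
    rw [← div_eq_mul_inv, le_div_iff₀ hDpos]; linarith
  have e3 : (l * w) ^ 2 * V ≤ t := by
    rw [hlw, hVt]
    have : D⁻¹ * √(V / t) ≤ 1 := by
      rw [inv_mul_le_iff₀ hDpos]; linarith
    have h0 : 0 ≤ D⁻¹ * √(V / t) := by positivity
    have : (D⁻¹ * √(V / t)) ^ 2 ≤ 1 := pow_le_one₀ h0 this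
    nlinarith
  nlinarith

/-- Bernstein tail bound for weighted sums of centred squared Gaussians. -/
lemma gaussianReal_pi_sum_sq_tail {N : ℕ} {w : NNReal} (hw : w ≠ 0) (a : Fin N → ℝ) {b t : ℝ}
    (hab : ∀ i, |a i| ≤ b) (hb : 0 ≤ b) (ht : 0 < t) :
    (Measure.pi fun _ : Fin N => gaussianReal 0 w).real
      {y | 12 * w * (√((∑ i, a i ^ 2) * t) + b * t) < |∑ i, a i * (y i ^ 2 - w)|}
      ≤ 2 * Real.exp (-t) := by
  have h1 := gaussianReal_pi_sum_sq_tail_upper hw a hab hb ht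
  have h2 := gaussianReal_pi_sum_sq_tail_upper hw (fun i => -a i) (b := b) (by simpa using hab) hb ht
  refine (measureReal_mono (fun y hy => ?_)).trans
    ((measureReal_union_le _ _).trans ((add_le_add h1 h2).trans_eq (by ring)))
  simp only [Set.mem_ofPred_eq, lt_abs, Set.mem_union, neg_sq, neg_mul,
    Finset.sum_neg_distrib] at hy ⊢
  exact hy

/-- A linear functional with unit coefficients of a Gaussian vector is Gaussian. -/
lemma gaussVec_map_dotProduct {k : ℕ} (w : NNReal) (x : Fin k → ℝ) (hx : ∑ j, x j ^ 2 = 1) :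
    (gaussVec k w).map (fun c => ∑ j, x j * c j) = gaussianReal 0 w := by
  have hmeas : Measurable fun c : Fin k → ℝ => ∑ j, x j * c j := by fun_prop
  have : IsProbabilityMeasure ((gaussVec k w).map (fun c => ∑ j, x j * c j)) :=
    Measure.isProbabilityMeasure_map hmeas.aemeasurable
  refine Measure.ext_of_charFun ?_
  ext s
  rw [charFun_apply_real, integral_map hmeas.aemeasurable (by fun_prop), charFun_gaussianReal]
  have h1 : ∀ c : Fin k → ℝ, Complex.exp (s * ((∑ j, x j * c j : ℝ) : ℂ) * Complex.I)
      = ∏ j, Complex.exp (((s * x j : ℝ) : ℂ) * (c j : ℂ) * Complex.I) := by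
    intro c
    rw [← Complex.exp_sum]
    congr 1
    push_cast
    rw [Finset.mul_sum, Finset.sum_mul]
    exact Finset.sum_congr rfl fun j _ => by ring
  simp_rw [h1]
  rw [gaussVec, integral_fintype_prod_eq_prod (𝕜 := ℂ)
    (fun (j : Fin k) (y : ℝ) => Complex.exp (((s * x j : ℝ) : ℂ) * (y : ℂ) * Complex.I))]
  simp_rw [← charFun_apply_real, charFun_gaussianReal]
  rw [← Complex.exp_sum]
  congr 1
  have hx' : ∑ j, (x j : ℂ) ^ 2 = 1 := by exact_mod_cast hx
  calc _ = ∑ j, (-(w * s ^ 2 / 2 : ℂ)) * (x j : ℂ) ^ 2 := by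
        refine Finset.sum_congr rfl fun j _ => ?_
        push_cast; ring
    _ = _ := by rw [← Finset.mul_sum, hx']; push_cast; ring

lemma measurePreserving_iidGaussVec_dotProduct {N k : ℕ} (w : NNReal) (x : Fin k → ℝ)
    (hx : ∑ j, x j ^ 2 = 1) :
    MeasurePreserving (fun (B : Fin N → Fin k → ℝ) i => ∑ j, x j * B i j) (iidGaussVec N k w)
      (Measure.pi fun _ => gaussianReal 0 w) :=
  measurePreserving_pi (fun _ : Fin N => gaussVec k w) (fun _ => gaussianReal 0 w) fun _ =>
    ⟨by fun_prop, gaussVec_map_dotProduct w x hx⟩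

/-- The unit sphere of a finite-dimensional normed space has a `1/2`-net of size at most `5 ^ dim`. -/
lemma exists_unit_sphere_net (E : Type*) [NormedAddCommGroup E] [NormedSpace ℝ E]
    [FiniteDimensional ℝ E] :
    ∃ T : Finset E, T.card ≤ 5 ^ Module.finrank ℝ E ∧ (∀ y ∈ T, ‖y‖ = 1) ∧
      ∀ x : E, ‖x‖ = 1 → ∃ y ∈ T, ‖x - y‖ ≤ 1 / 2 := by
  classical
  let P : Finset E → Prop := fun s => (∀ c ∈ s, ‖c‖ = 1) ∧
    ∀ c ∈ s, ∀ d ∈ s, c ≠ d → 1 / 2 < ‖c - d‖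
  have hcard : ∀ s, P s → s.card ≤ 5 ^ Module.finrank ℝ E := by
    intro s hs
    have hinj : Function.Injective fun c : E => (2 : ℝ) • c := smul_right_injective E two_ne_zero
    rw [← Finset.card_image_of_injective s hinj]
    refine Besicovitch.card_le_of_separated _ ?_ ?_
    · simp only [Finset.mem_image, forall_exists_index, and_imp, forall_apply_eq_imp_iff₂]
      intro c hc
      rw [norm_smul, hs.1 c hc]; simp
    · simp only [Finset.mem_image, forall_exists_index, and_imp, forall_apply_eq_imp_iff₂]
      intro c hc d hd hne
      have := hs.2 c hc d hd (fun h => hne (by rw [h]))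
      rw [← smul_sub, norm_smul, Real.norm_eq_abs, abs_two]
      linarith
  obtain ⟨s, hs, hmax⟩ : ∃ s, P s ∧ ∀ s', P s' → s'.card ≤ s.card := by
    have hne : ∃ m, ∃ s, P s ∧ s.card = m := ⟨0, ∅, by simp [P], rfl⟩
    have hb : ∀ m, (∃ s, P s ∧ s.card = m) → m ≤ 5 ^ Module.finrank ℝ E := by
      rintro m ⟨s, hs, rfl⟩; exact hcard s hs
    obtain ⟨m, hm⟩ := hne
    obtain ⟨s, hs, hsm⟩ := Nat.findGreatest_spec (P := fun m => ∃ s, P s ∧ s.card = m)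
      (hb m hm) hm
    refine ⟨s, hs, fun s' hs' => ?_⟩
    rw [hsm]
    exact Nat.le_findGreatest (hcard s' hs') ⟨s', hs', rfl⟩
  refine ⟨s, hcard s hs, hs.1, fun x hx => ?_⟩
  by_contra! hcon
  have hxs : x ∉ s := fun h => by have := hcon x h; norm_num at this
  have hP : P (insert x s) := by
    refine ⟨?_, ?_⟩
    · simp only [Finset.mem_insert, forall_eq_or_imp]
      exact ⟨hx, hs.1⟩
    · intro c hc d hd hne
      rcases Finset.mem_insert.mp hc with hc' | hc' <;>
        rcases Finset.mem_insert.mp hd with hd' | hd'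
      · exact absurd (hc'.trans hd'.symm) hne
      · exact hc' ▸ hcon d hd'
      · rw [hd', norm_sub_rev]; exact hcon c hc'
      · exact hs.2 c hc' d hd' hne
  have := hmax _ hP
  rw [Finset.card_insert_of_notMem hxs] at this
  omega

/-- The norm of a symmetric operator is controlled by its quadratic form on a `1/2`-net. -/
lemma norm_le_of_quadraticForm_net {E : Type*} [NormedAddCommGroup E] [InnerProductSpace ℝ E]
    {A : E →L[ℝ] E} (hA : A.IsSymmetric) {T : Finset E} (hT : ∀ y ∈ T, ‖y‖ = 1)
    (hnet : ∀ x : E, ‖x‖ = 1 → ∃ y ∈ T, ‖x - y‖ ≤ 1 / 2) {m : ℝ} (hm : 0 ≤ m)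
    (h : ∀ y ∈ T, |inner ℝ (A y) y| ≤ m) : ‖A‖ ≤ 32 * m := by
  have hunit : ∀ x : E, ‖x‖ = 1 → |inner ℝ (A x) x| ≤ m + 31 / 32 * ‖A‖ := by
    intro x hx
    obtain ⟨y, hy, hxy⟩ := hnet x hx
    have hsplit : inner ℝ (A x) x = inner ℝ (A y) y + inner ℝ (A (x - y)) (x + y) := by
      have h1 : inner ℝ (A y) x = inner ℝ (A x) y := by
        rw [real_inner_comm]
        exact (hA x y).symm
      simp only [map_sub, inner_sub_left, inner_add_right]
      linarith
    have hpar : ‖x + y‖ ^ 2 + ‖x - y‖ ^ 2 = 4 := by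
      have := parallelogram_law_with_norm ℝ x y
      rw [hx, hT y hy] at this
      nlinarith
    have hprod : ‖x - y‖ * ‖x + y‖ ≤ 31 / 32 := by
      refine abs_le_of_sq_le_sq' (a := ‖x - y‖ * ‖x + y‖) ?_ (by norm_num) |>.2
      have h0 := norm_nonneg (x - y)
      rw [mul_pow]
      have h2 : ‖x + y‖ ^ 2 = 4 - ‖x - y‖ ^ 2 := by linarith
      have h3 : ‖x - y‖ ^ 2 ≤ 1 / 4 := by nlinarith
      rw [h2]
      nlinarith
    have hcs : |inner ℝ (A (x - y)) (x + y)| ≤ 31 / 32 * ‖A‖ := by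
      calc _ ≤ ‖A (x - y)‖ * ‖x + y‖ := abs_real_inner_le_norm _ _
        _ ≤ ‖A‖ * ‖x - y‖ * ‖x + y‖ := by gcongr; exact A.le_opNorm _
        _ = ‖A‖ * (‖x - y‖ * ‖x + y‖) := by ring
        _ ≤ ‖A‖ * (31 / 32) := by gcongr
        _ = _ := by ring
    rw [hsplit]
    exact (abs_add_le _ _).trans (add_le_add (h y hy) hcs)
  have hle : ‖A‖ ≤ m + 31 / 32 * ‖A‖ := by
    conv_lhs => rw [A.norm_eq_iSup_rayleighQuotient hA]
    refine ciSup_le fun x => ?_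
    rcases eq_or_ne x 0 with rfl | hx
    · simp only [ContinuousLinearMap.rayleighQuotient_apply_zero, abs_zero]
      positivity
    have hx' : ‖x‖ ≠ 0 := norm_ne_zero_iff.mpr hx
    have h1 := hunit (‖x‖⁻¹ • x) (by rw [norm_smul, norm_inv, norm_norm, inv_mul_cancel₀ hx'])
    rw [← A.rayleigh_smul x (c := ‖x‖⁻¹) (inv_ne_zero hx')]
    rw [ContinuousLinearMap.rayleighQuotient, ContinuousLinearMap.reApplyInnerSelf_apply,
      norm_smul, norm_inv, norm_norm, inv_mul_cancel₀ hx']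
    simpa using h1
  linarith

lemma specNorm_add_le {m k : ℕ} (M M' : Matrix (Fin m) (Fin k) ℝ) :
    specNorm (M + M') ≤ specNorm M + specNorm M' := by
  simp only [specNorm, map_add]
  exact norm_add_le _ _

lemma specNorm_smul_one_le {k : ℕ} (c : ℝ) :
    specNorm (c • (1 : Matrix (Fin k) (Fin k) ℝ)) ≤ |c| := by
  refine ContinuousLinearMap.opNorm_le_bound _ (abs_nonneg c) fun x => ?_
  simp [Matrix.toLpLin_one, norm_smul]

lemma inner_toEuclideanLin_sum_vecMulVec {N k : ℕ} (a : Fin N → ℝ) (B : Fin N → Fin k → ℝ) (s : ℝ)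
    (y : EuclideanSpace ℝ (Fin k)) (hy : ‖y‖ = 1) :
    inner ℝ (Matrix.toEuclideanLin (∑ i, a i • (Matrix.vecMulVec (B i) (B i) -
      s • (1 : Matrix (Fin k) (Fin k) ℝ))) y) y = ∑ i, a i * ((∑ j, y j * B i j) ^ 2 - s) := by
  have h1 : ∀ b : Fin k → ℝ, inner ℝ (Matrix.toEuclideanLin (Matrix.vecMulVec b b) y) y
      = (∑ j, y j * b j) ^ 2 := by
    intro b
    simp only [PiLp.inner_apply, Matrix.toLpLin_apply, Matrix.vecMulVec_mulVec]
    simp only [sq, Finset.sum_mul]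
    refine Finset.sum_congr rfl fun i _ => ?_
    simp [dotProduct, mul_comm, mul_assoc, mul_left_comm]
  simp only [map_sum, map_smul, map_sub, LinearMap.sum_apply, LinearMap.smul_apply,
    LinearMap.sub_apply, sum_inner, real_inner_smul_left, inner_sub_left, h1, Matrix.toLpLin_one,
    LinearMap.id_apply, real_inner_self_eq_norm_sq, hy]
  simp

/-- Deterministic reduction of the spectral norm of a weighted sample covariance matrix to a
net of directions. -/
lemma specNorm_sum_vecMulVec_sub_le {N k : ℕ} (a : Fin N → ℝ) (B : Fin N → Fin k → ℝ) (s : ℝ)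
    {T : Finset (EuclideanSpace ℝ (Fin k))} (hT : ∀ y ∈ T, ‖y‖ = 1)
    (hnet : ∀ x : EuclideanSpace ℝ (Fin k), ‖x‖ = 1 → ∃ y ∈ T, ‖x - y‖ ≤ 1 / 2) {m : ℝ}
    (hm : 0 ≤ m) (h : ∀ y ∈ T, |∑ i, a i * ((∑ j, y j * B i j) ^ 2 - s)| ≤ m) :
    specNorm ((∑ i, a i • Matrix.vecMulVec (B i) (B i)) - s • (1 : Matrix (Fin k) (Fin k) ℝ))
      ≤ 32 * m + |(∑ i, a i - 1) * s| := by
  set M := ∑ i, a i • (Matrix.vecMulVec (B i) (B i) - s • (1 : Matrix (Fin k) (Fin k) ℝ)) with hM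
  have hdecomp : (∑ i, a i • Matrix.vecMulVec (B i) (B i)) - s • (1 : Matrix (Fin k) (Fin k) ℝ)
      = M + ((∑ i, a i - 1) * s) • (1 : Matrix (Fin k) (Fin k) ℝ) := by
    simp only [hM, smul_sub, Finset.sum_sub_distrib, smul_smul, ← Finset.sum_smul, sub_mul, one_mul,
      sub_smul, Finset.sum_mul]
    abel
  have hherm : M.IsHermitian := by
    ext i j
    simp [hM, Matrix.sum_apply, Matrix.vecMulVec_apply, Matrix.one_apply, mul_comm, eq_comm]
  rw [hdecomp]
  refine (specNorm_add_le _ _).trans (add_le_add ?_ (specNorm_smul_one_le _))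
  refine norm_le_of_quadraticForm_net (Matrix.isSymmetric_toEuclideanLin_iff.mpr hherm) hT hnet hm
    fun y hy => ?_
  have := h y hy
  rwa [← inner_toEuclideanLin_sum_vecMulVec a B s y (hT y hy)] at this

/-- Bernstein-type deviation inequality in spectral norm for weighted Gaussian covariances. -/
lemma iidGaussVec_specNorm_tail {N k : ℕ} {w : NNReal} (hw : w ≠ 0) (a : Fin N → ℝ) {b t : ℝ}
    (hab : ∀ i, |a i| ≤ b) (hb : 0 ≤ b) (ht : 0 < t) :
    (iidGaussVec N k w).real {B | ¬ specNorm ((∑ i, a i • Matrix.vecMulVec (B i) (B i))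
        - (w : ℝ) • (1 : Matrix (Fin k) (Fin k) ℝ))
          ≤ 32 * (12 * w * (√((∑ i, a i ^ 2) * t) + b * t)) + |(∑ i, a i - 1) * w|}
      ≤ 5 ^ k * (2 * Real.exp (-t)) := by
  have : IsProbabilityMeasure (iidGaussVec N k w) := by unfold iidGaussVec; infer_instance
  obtain ⟨T, hcard, hT, hnet⟩ := exists_unit_sphere_net (EuclideanSpace ℝ (Fin k))
  rw [finrank_euclideanSpace_fin] at hcard
  set m := 12 * w * (√((∑ i, a i ^ 2) * t) + b * t) with hm
  have hm0 : 0 ≤ m := by positivity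
  let F : EuclideanSpace ℝ (Fin k) → Set (Fin N → Fin k → ℝ) := fun y =>
    {B | m < |∑ i, a i * ((∑ j, y j * B i j) ^ 2 - w)|}
  have hF : ∀ y ∈ T, (iidGaussVec N k w).real (F y) ≤ 2 * Real.exp (-t) := by
    intro y hy
    have hsum : ∑ j, y j ^ 2 = 1 := by
      rw [← EuclideanSpace.real_norm_sq_eq, hT y hy, one_pow]
    have hmp := measurePreserving_iidGaussVec_dotProduct (N := N) w (fun j => y j) hsum
    have hms : MeasurableSet {z : Fin N → ℝ | m < |∑ i, a i * (z i ^ 2 - w)|} :=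
      measurableSet_lt (by fun_prop) (by fun_prop)
    have := gaussianReal_pi_sum_sq_tail hw a hab hb ht
    rw [← hm, ← hmp.measureReal_preimage hms.nullMeasurableSet] at this
    exact this
  calc _ ≤ (iidGaussVec N k w).real (⋃ y ∈ T, F y) := by
        refine measureReal_mono (fun B hB => ?_) (measure_ne_top _ _)
        by_contra hcon
        refine hB (specNorm_sum_vecMulVec_sub_le a B w hT hnet hm0 fun y hy => ?_)
        by_contra hlt
        exact hcon (Set.mem_biUnion hy (not_le.mp hlt))
    _ ≤ ∑ y ∈ T, (iidGaussVec N k w).real (F y) := measureReal_biUnion_finset_le _ _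
    _ ≤ ∑ _y ∈ T, 2 * Real.exp (-t) := Finset.sum_le_sum hF
    _ = T.card * (2 * Real.exp (-t)) := by rw [Finset.sum_const, nsmul_eq_mul]
    _ ≤ _ := by
        gcongr
        exact_mod_cast hcard

/-- with `b_1, …, b_N` i.i.d. `N(0, (1/N) I_{n-1})` and `v ∈ ℝ^N` fixed, there
is a universal constant `C > 0` such that for any `δ ∈ (0,1)`, with probability at least
`1 - δ`, `‖∑_i v_i² b_i b_iᵀ - (1/N) I_{n-1}‖ ≤ C (√(n log(N/δ))/N ‖v‖₄²
  + (n log(N/δ) + log²(N/δ))/N ‖v‖_∞²) + |‖v‖² - 1|/N` in spectral norm. -/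
theorem stmt_4 :
    ∃ C : ℝ, 0 < C ∧
      ∀ (N n : ℕ) (v : Fin N → ℝ) (δ : ℝ), 1 ≤ n → n ≤ N → 0 < δ → δ < 1 →
        ENNReal.ofReal (1 - δ) ≤
          (iidGaussVec N (n - 1) ((N : NNReal))⁻¹)
            {B | specNorm
                ((∑ i, (v i) ^ 2 • Matrix.vecMulVec (B i) (B i))
                  - ((1 : ℝ) / N) • (1 : Matrix (Fin (n - 1)) (Fin (n - 1)) ℝ))
              ≤ C * (Real.sqrt (n * Real.log (N / δ)) / N * lpNorm 4 v ^ 2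
                    + (n * Real.log (N / δ) + (Real.log (N / δ)) ^ 2) / N * supNorm v ^ 2)
                + |eucNorm v ^ 2 - 1| / N} := by
  refine ⟨32 * 12 * 5, by norm_num, fun N n v δ hn1 hnN hδ0 hδ1 => ?_⟩
  have hprob : IsProbabilityMeasure (iidGaussVec N (n - 1) ((N : NNReal))⁻¹) := by
    unfold iidGaussVec; infer_instance
  have hN1 : 1 ≤ N := hn1.trans hnN
  have hNR : (1 : ℝ) ≤ N := by exact_mod_cast hN1
  have hN0 : (0 : ℝ) < N := by linarith
  have hlogN : 0 ≤ Real.log N := Real.log_nonneg hNR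
  have hlogδ : Real.log δ < 0 := Real.log_neg hδ0 hδ1
  have hL : Real.log (N / δ) = Real.log N - Real.log δ := Real.log_div hN0.ne' hδ0.ne'
  set L := Real.log (N / δ)
  have hLpos : 0 < L := by rw [hL]; linarith
  have hnR : (1 : ℝ) ≤ n := by exact_mod_cast hn1
  have hsup : ∀ i, |v i| ≤ supNorm v := fun i => le_ciSup (f := fun i => |v i|)
    (Set.finite_range _).bddAbove i
  have hsup0 : 0 ≤ supNorm v := Real.iSup_nonneg fun i => abs_nonneg _
  rcases hn1.eq_or_lt with rfl | hn2
  · refine (ENNReal.ofReal_le_one.mpr (by linarith)).trans_eq ?_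
    rw [← measure_univ (μ := iidGaussVec N (1 - 1) ((N : NNReal))⁻¹)]
    congr 1
    symm
    refine Set.eq_univ_of_forall fun B => ?_
    have h0 : ∀ M : Matrix (Fin (1 - 1)) (Fin (1 - 1)) ℝ, specNorm M = 0 := fun M => by
      rw [specNorm, norm_eq_zero]
      ext x i
      exact absurd i.2 (by simp)
    simp only [Set.mem_ofPred_eq, h0]
    positivity
  have hlog2 : Real.log 2 ≤ L := by
    have h2 : (2 : ℝ) ≤ N := by exact_mod_cast hn2.trans_le hnN
    rw [hL]
    linarith [Real.log_le_log two_pos h2]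
  have hw : ((N : NNReal))⁻¹ ≠ 0 := inv_ne_zero (by exact_mod_cast (by omega : N ≠ 0))
  have hwR : (((N : NNReal)⁻¹ : NNReal) : ℝ) = 1 / N := by simp
  have ht : 0 < 5 * (n * L) := by positivity
  have htail := iidGaussVec_specNorm_tail (k := n - 1) hw (fun i => v i ^ 2) (b := supNorm v ^ 2)
    (fun i => by rw [abs_pow]; exact pow_le_pow_left₀ (abs_nonneg _) (hsup i) 2) (by positivity) ht
  have hsmall : (5 : ℝ) ^ (n - 1) * (2 * Real.exp (-(5 * (n * L)))) ≤ δ := by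
    have h5 : (5 : ℝ) ^ (n - 1) ≤ Real.exp (3 * (n * L)) := by
      calc (5 : ℝ) ^ (n - 1) ≤ 5 ^ n := pow_le_pow_right₀ (by norm_num) (by omega)
        _ ≤ (Real.exp (3 * L)) ^ n := by
            gcongr
            calc (5 : ℝ) ≤ 2 ^ 3 := by norm_num
              _ = Real.exp (3 * Real.log 2) := by
                  rw [mul_comm, Real.exp_mul, Real.exp_log two_pos]; norm_num
              _ ≤ _ := by gcongr
        _ = _ := by rw [← Real.exp_nat_mul]; congr 1; ring
    have hnL : L ≤ n * L := le_mul_of_one_le_left hLpos.le hnR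
    calc (5 : ℝ) ^ (n - 1) * (2 * Real.exp (-(5 * (n * L))))
        ≤ Real.exp (3 * (n * L)) * (Real.exp (n * L) * Real.exp (-(5 * (n * L)))) := by
          gcongr
          rw [← Real.log_le_iff_le_exp two_pos]
          linarith
      _ = Real.exp (-(n * L)) := by rw [← Real.exp_add, ← Real.exp_add]; congr 1; ring
      _ ≤ Real.exp (Real.log δ) := Real.exp_le_exp.mpr (by linarith)
      _ = δ := Real.exp_log hδ0
  let G := {B : Fin N → Fin (n - 1) → ℝ | specNorm
                ((∑ i, (v i) ^ 2 • Matrix.vecMulVec (B i) (B i))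
                  - ((1 : ℝ) / N) • (1 : Matrix (Fin (n - 1)) (Fin (n - 1)) ℝ))
              ≤ 32 * 12 * 5 * (Real.sqrt (n * L) / N * lpNorm 4 v ^ 2
                    + (n * L + L ^ 2) / N * supNorm v ^ 2)
                + |eucNorm v ^ 2 - 1| / N}
  have hlp : lpNorm 4 v ^ 2 = √(∑ i, (v i ^ 2) ^ 2) := by
    have h4 : ∀ i, |v i| ^ (4 : ℝ) = (v i ^ 2) ^ 2 := fun i => by
      rw [show (4 : ℝ) = ((4 : ℕ) : ℝ) by norm_num, Real.rpow_natCast,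
        (by decide : Even 4).pow_abs]
      ring
    simp only [_root_.lpNorm, h4]
    rw [← Real.rpow_natCast, ← Real.rpow_mul (by positivity), Real.sqrt_eq_rpow]
    norm_num
  have heuc : eucNorm v ^ 2 = ∑ i, v i ^ 2 := Real.sq_sqrt (by positivity)
  have hcompl : (iidGaussVec N (n - 1) ((N : NNReal))⁻¹).real Gᶜ ≤ δ := by
    refine le_trans (measureReal_mono ?_ (measure_ne_top _ _)) (htail.trans hsmall)
    intro B hB hle
    refine hB ?_
    rw [hwR] at hle
    refine hle.trans (add_le_add ?_ ?_)
    · rw [Real.sqrt_mul (by positivity), ← hlp, Real.sqrt_mul (by norm_num : (0 : ℝ) ≤ 5)]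
      have h5 : √5 ≤ 5 := Real.sqrt_le_iff.mpr (by norm_num)
      calc 32 * (12 * (1 / (N : ℝ)) * (lpNorm 4 v ^ 2 * (√5 * √(n * L))
            + supNorm v ^ 2 * (5 * (n * L))))
          ≤ 32 * (12 * (1 / (N : ℝ)) * (lpNorm 4 v ^ 2 * (5 * √(n * L))
            + supNorm v ^ 2 * (5 * (n * L + L ^ 2)))) := by
            gcongr
            linarith [sq_nonneg L]
        _ = _ := by ring
    · rw [heuc, mul_one_div, abs_div, abs_of_pos hN0]
  have hone : (1 : ENNReal) ≤ iidGaussVec N (n - 1) ((N : NNReal))⁻¹ G + ENNReal.ofReal δ := by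
    rw [← measure_univ (μ := iidGaussVec N (n - 1) ((N : NNReal))⁻¹), ← Set.union_compl_self G]
    refine (measure_union_le _ _).trans (add_le_add le_rfl ?_)
    rw [← ofReal_measureReal]
    exact ENNReal.ofReal_le_ofReal hcompl
  rw [ENNReal.ofReal_sub _ hδ0.le, ENNReal.ofReal_one]
  exact tsub_le_iff_right.mpr hone
end

section
/- Let b_1,…,b_N be i.i.d. N(0, (1/N) I_{n−1}) Gaussian vectors. There is a universal constant C > 0 such that for any δ ∈ (0,1), with probability at least 1−δ, ‖Σ_{i=1}^N (‖b_i‖² − (n−1)/N) b_i b_iᵀ − (2/N) I_{n−1}‖ ≤ C( n·√(log(N/δ))/N^{3/2} + ((n·log(N/δ))^{3/2} + log³(N/δ))/N² ), where ‖·‖ on matrices denotes the spectral norm. -/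
open MeasureTheory ProbabilityTheory Matrix

lemma gaussianReal_zero_one_withDensity :
    gaussianReal 0 1 = volume.withDensity fun x =>
      ENNReal.ofReal ((√(2 * Real.pi))⁻¹ * Real.exp (-(1/2) * x ^ 2)) := by
  rw [gaussianReal_of_var_ne_zero _ one_ne_zero]
  congr 1
  funext x
  simp only [gaussianPDF, gaussianPDFReal, NNReal.coe_one, mul_one, sub_zero]
  congr 3
  ring

lemma integrable_gaussianReal_zero_one_iff {f : ℝ → ℝ} :
    Integrable f (gaussianReal 0 1) ↔ Integrable fun x => f x * Real.exp (-(1/2) * x ^ 2) := by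
  rw [gaussianReal_zero_one_withDensity, integrable_withDensity_iff (by fun_prop)
    (.of_forall fun x => ENNReal.ofReal_lt_top)]
  have hpos : (0:ℝ) < (√(2 * Real.pi))⁻¹ := by positivity
  simp_rw [ENNReal.toReal_ofReal (mul_nonneg hpos.le (Real.exp_nonneg _))]
  rw [← integrable_const_mul_iff (Ne.isUnit hpos.ne')
    (f := fun x => f x * Real.exp (-(1/2) * x ^ 2))]
  refine integrable_congr (.of_forall fun x => ?_)
  ring

lemma integral_gaussianReal_zero_one (f : ℝ → ℝ) :
    ∫ x, f x ∂(gaussianReal 0 1)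
      = (√(2 * Real.pi))⁻¹ * ∫ x, f x * Real.exp (-(1/2) * x ^ 2) := by
  rw [integral_gaussianReal_eq_integral_smul one_ne_zero, ← integral_const_mul]
  congr 1
  funext x
  simp only [gaussianPDFReal, NNReal.coe_one, mul_one, sub_zero, smul_eq_mul]
  rw [show -x ^ 2 / 2 = -(1/2) * x ^ 2 by ring]
  ring

lemma integrable_exp_mul_sq_gaussianReal {c : ℝ} (hc : c < 1 / 2) :
    Integrable (fun x => Real.exp (c * x ^ 2)) (gaussianReal 0 1) := by
  rw [integrable_gaussianReal_zero_one_iff]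
  refine (integrable_exp_neg_mul_sq (b := 1 / 2 - c) (by linarith)).congr (.of_forall fun x => ?_)
  simp only
  rw [← Real.exp_add]
  ring_nf

lemma integral_exp_mul_sq_gaussianReal {c : ℝ} (hc : c < 1 / 2) :
    ∫ x, Real.exp (c * x ^ 2) ∂(gaussianReal 0 1) = (√(1 - 2 * c))⁻¹ := by
  rw [integral_gaussianReal_zero_one]
  have : ∀ x : ℝ, Real.exp (c * x ^ 2) * Real.exp (-(1/2) * x ^ 2)
      = Real.exp (-(1 / 2 - c) * x ^ 2) := fun x => by
    rw [← Real.exp_add]; ring_nf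
  simp_rw [this]
  rw [integral_gaussian, ← Real.sqrt_inv, ← Real.sqrt_inv, ← Real.sqrt_mul (by positivity)]
  congr 1
  have : 1 - 2 * c ≠ 0 := by linarith
  have : 1 / 2 - c ≠ 0 := by linarith
  field_simp

lemma integrable_pow_gaussianReal (n : ℕ) :
    Integrable (fun x => x ^ n) (gaussianReal 0 1) := by
  rw [integrable_gaussianReal_zero_one_iff]
  have := integrable_rpow_mul_exp_neg_mul_sq (b := 1 / 2) (by norm_num) (s := n)
    (by have := n.cast_nonneg (α := ℝ); linarith)
  simpa using this

lemma integral_sq_gaussianReal : ∫ x, x ^ 2 ∂(gaussianReal 0 1) = 1 := by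
  have h := variance_id_gaussianReal (μ := 0) (v := 1)
  rw [variance_eq_integral (by fun_prop)] at h
  simpa using h

lemma integral_pow_four_gaussianReal : ∫ x, x ^ 4 ∂(gaussianReal 0 1) = 3 := by
  have hi := fun n => integrable_gaussianReal_zero_one_iff.1 (integrable_pow_gaussianReal n)
  have h2 := integral_sq_gaussianReal
  rw [integral_gaussianReal_zero_one] at h2 ⊢
  have hp := integral_mul_deriv_eq_deriv_mul_of_integrable
    (u := fun x : ℝ => x ^ 3) (v := fun x => Real.exp (-(1/2) * x ^ 2))
    (u' := fun x => 3 * x ^ 2) (v' := fun x => - x * Real.exp (-(1/2) * x ^ 2))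
    (fun x _ => by simpa using hasDerivAt_pow 3 x)
    (fun x _ => by
      have := ((hasDerivAt_pow 2 x).const_mul (-(1/2) : ℝ)).exp
      convert! this using 1
      simp; ring)
    ((hi 4).neg.congr (.of_forall fun x => by simp; ring))
    (((hi 2).const_mul 3).congr (.of_forall fun x => by simp; ring)) (hi 3)
  have e1 : ∀ x : ℝ, x ^ 3 * (-x * Real.exp (-(1/2) * x ^ 2))
      = - (x ^ 4 * Real.exp (-(1/2) * x ^ 2)) := fun x => by ring
  have e2 : ∀ x : ℝ, 3 * x ^ 2 * Real.exp (-(1/2) * x ^ 2)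
      = 3 * (x ^ 2 * Real.exp (-(1/2) * x ^ 2)) := fun x => by ring
  simp_rw [e1, e2] at hp
  rw [integral_neg, integral_const_mul, neg_inj] at hp
  rw [hp]
  linarith

lemma exp_neg_mul_inv_sqrt_le {c : ℝ} (hc : |c| ≤ 1 / 8) :
    Real.exp (-c) * (√(1 - 2 * c))⁻¹ ≤ Real.exp (2 * c ^ 2) := by
  obtain ⟨h1, h2⟩ := abs_le.1 hc
  have hpos : 0 < 1 - 2 * c := by linarith
  rw [mul_inv_le_iff₀ (Real.sqrt_pos.2 hpos), ← div_le_iff₀' (Real.exp_pos _), ← Real.exp_sub]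
  apply Real.le_sqrt_of_sq_le
  rw [← Real.exp_nat_mul]
  set z := 2 * c + 4 * c ^ 2 with hzdef
  have e : ((2:ℕ):ℝ) * (-c - 2 * c ^ 2) = -z := by push_cast; ring
  rw [e, Real.exp_neg, inv_le_comm₀ (Real.exp_pos _) hpos]
  rw [inv_le_iff_one_le_mul₀ hpos]
  rcases le_or_gt c 0 with h | h
  · have := Real.add_one_le_exp z
    have : (z + 1) * (1 - 2 * c) ≤ Real.exp z * (1 - 2 * c) := by gcongr
    have h3 : 0 ≤ -c * c ^ 2 := mul_nonneg (by linarith) (sq_nonneg _)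
    nlinarith
  · have hzp : 0 ≤ z := by positivity
    have := Real.quadratic_le_exp_of_nonneg hzp
    have h3 : (1 + z + z ^ 2 / 2) * (1 - 2 * c) ≤ Real.exp z * (1 - 2 * c) := by gcongr
    have h4 : 1 + 2 * c + 6 * c ^ 2 ≤ 1 + z + z ^ 2 / 2 := by
      rw [hzdef]; nlinarith [pow_pos h 3, pow_pos h 4]
    have h5 : 1 ≤ (1 + 2 * c + 6 * c ^ 2) * (1 - 2 * c) := by nlinarith [pow_pos h 2]
    nlinarith

lemma integrable_exp_mul_chiSq {d : ℕ} {c : ℝ} (hc : |c| ≤ 1 / 8) :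
    Integrable (fun g => Real.exp (c * (∑ l, g l ^ 2 - d))) (gaussVec d 1) ∧
      ∫ g, Real.exp (c * (∑ l, g l ^ 2 - d)) ∂(gaussVec d 1) ≤ Real.exp (2 * d * c ^ 2) := by
  have hc' : c < 1 / 2 := by linarith [le_abs_self c]
  have e : (fun g : Fin d → ℝ => Real.exp (c * (∑ l, g l ^ 2 - d)))
      = fun g => ∏ l, (Real.exp (-c) * Real.exp (c * g l ^ 2)) := by
    funext g
    simp_rw [← Real.exp_add, ← Real.exp_sum]
    congr 1
    simp [Finset.sum_add_distrib, ← Finset.mul_sum]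
    ring
  rw [e, gaussVec]
  refine ⟨Integrable.fintype_prod (f := fun _ y => Real.exp (-c) * Real.exp (c * y ^ 2))
    fun _ => (integrable_exp_mul_sq_gaussianReal hc').const_mul _, ?_⟩
  rw [integral_fintype_prod_eq_pow (fun y => Real.exp (-c) * Real.exp (c * y ^ 2)),
    integral_const_mul, integral_exp_mul_sq_gaussianReal hc', Fintype.card_fin,
    show 2 * (d : ℝ) * c ^ 2 = d * (2 * c ^ 2) by ring, Real.exp_nat_mul]
  gcongr
  exact exp_neg_mul_inv_sqrt_le hc

lemma integrable_exp_abs_chiSq {d : ℕ} (hd : 1 ≤ d) :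
    Integrable (fun g => Real.exp (|∑ l, g l ^ 2 - (d : ℝ)| / (8 * √d))) (gaussVec d 1) ∧
      ∫ g, Real.exp (|∑ l, g l ^ 2 - (d : ℝ)| / (8 * √d)) ∂(gaussVec d 1) ≤ 3 := by
  have hd' : (1 : ℝ) ≤ d := by exact_mod_cast hd
  have hs : 1 ≤ √(d : ℝ) := Real.one_le_sqrt.2 hd'
  set c : ℝ := 1 / (8 * √d) with hcdef
  have hc0 : 0 ≤ c := by positivity
  have hc : |c| ≤ 1 / 8 := by
    rw [abs_of_nonneg hc0, hcdef]
    gcongr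
    linarith
  have hcsq : 2 * d * c ^ 2 = 1 / 32 := by
    rw [hcdef, div_pow, mul_pow, Real.sq_sqrt (by positivity)]
    field_simp
    norm_num
  obtain ⟨i1, b1⟩ := integrable_exp_mul_chiSq (d := d) hc
  obtain ⟨i2, b2⟩ := integrable_exp_mul_chiSq (d := d) (c := -c) (by rwa [abs_neg])
  have hle : ∀ g : Fin d → ℝ, Real.exp (|∑ l, g l ^ 2 - (d : ℝ)| / (8 * √d)) ≤
      Real.exp (c * (∑ l, g l ^ 2 - d)) + Real.exp (-c * (∑ l, g l ^ 2 - d)) := fun g => by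
    have := Real.exp_abs_le (c * (∑ l, g l ^ 2 - d))
    rw [abs_mul, abs_of_nonneg hc0] at this
    rw [div_eq_mul_one_div, mul_comm, ← hcdef, neg_mul]
    exact this
  have hi : Integrable (fun g => Real.exp (|∑ l, g l ^ 2 - (d : ℝ)| / (8 * √d)))
      (gaussVec d 1) := by
    refine (i1.add i2).mono' (by fun_prop : Continuous _).aestronglyMeasurable
      (.of_forall fun g => ?_)
    rw [Real.norm_of_nonneg (Real.exp_nonneg _)]
    exact hle g
  refine ⟨hi, ?_⟩
  calc _ ≤ ∫ g, (Real.exp (c * (∑ l, g l ^ 2 - d)) + Real.exp (-c * (∑ l, g l ^ 2 - d)))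
          ∂(gaussVec d 1) := integral_mono hi (i1.add i2) hle
    _ ≤ Real.exp (1 / 32) + Real.exp (1 / 32) := by
        rw [integral_add i1 i2]
        rw [neg_sq] at b2
        rw [hcsq] at b1 b2
        exact add_le_add b1 b2
    _ ≤ 3 := by
        have := Real.exp_bound_div_one_sub_of_interval (x := 1 / 32) (by norm_num) (by norm_num)
        norm_num at this ⊢
        linarith

lemma exists_identDistrib_normSq_dotProduct {d : ℕ} {x : Fin d → ℝ} (hx : ∑ l, x l ^ 2 = 1) :
    ∃ i₀, IdentDistrib (fun g : Fin d → ℝ => (∑ l, g l ^ 2, ∑ l, x l * g l))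
      (fun g => (∑ l, g l ^ 2, g i₀)) (gaussVec d 1) (gaussVec d 1) := by
  have hd : Nonempty (Fin d) := by
    by_contra h
    rw [not_nonempty_iff] at h
    simp at hx
  obtain ⟨i₀⟩ := hd
  have hxn : ‖WithLp.toLp 2 x‖ = 1 := by
    rw [EuclideanSpace.norm_eq]
    simp [hx]
  obtain ⟨b, hb⟩ := Orthonormal.exists_orthonormalBasis_extension_of_card_eq (𝕜 := ℝ)
    (E := EuclideanSpace ℝ (Fin d)) (ι := Fin d) (by simp) (v := fun _ => WithLp.toLp 2 x)
    (s := {i₀}) (by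
      constructor
      · rintro ⟨i, hi⟩; simpa using hxn
      · rintro ⟨i, hi⟩ ⟨j, hj⟩ hij
        simp only [Set.mem_singleton_iff] at hi hj
        subst hi hj
        exact absurd rfl hij)
  have hb0 := hb i₀ rfl
  refine ⟨i₀, by fun_prop, by fun_prop, ?_⟩
  have h := stdGaussian_eq_map_pi_orthonormalBasis b
  rw [← map_pi_eq_stdGaussian] at h
  let F : EuclideanSpace ℝ (Fin d) → ℝ × ℝ := fun v => (‖v‖ ^ 2, inner ℝ (WithLp.toLp 2 x) v)
  have hF : Measurable F := by fun_prop
  have h2 := congrArg (Measure.map F) h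
  rw [Measure.map_map hF (by fun_prop), Measure.map_map hF (by fun_prop)] at h2
  convert! h2 using 2
  · funext g
    simp only [F, Function.comp_apply, EuclideanSpace.real_norm_sq_eq, PiLp.inner_apply]
    simp [mul_comm]
  · funext g
    have e1 : ‖∑ i, g i • b i‖ ^ 2 = ∑ i, g i ^ 2 := by
      rw [← real_inner_self_eq_norm_sq, b.orthonormal.inner_sum]
      simp [pow_two]
    have e2 : inner ℝ (WithLp.toLp 2 x) (∑ i, g i • b i) = g i₀ := by
      rw [← hb0, b.orthonormal.inner_right_fintype]
    simp [F, e1, e2]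

lemma integrable_exp_sq_dotProduct {d : ℕ} {x : Fin d → ℝ} (hx : ∑ l, x l ^ 2 = 1) :
    Integrable (fun g => Real.exp (3 / 8 * (∑ l, x l * g l) ^ 2)) (gaussVec d 1) ∧
      ∫ g, Real.exp (3 / 8 * (∑ l, x l * g l) ^ 2) ∂(gaussVec d 1) = 2 := by
  obtain ⟨i₀, h⟩ := exists_identDistrib_normSq_dotProduct hx
  have h' := h.comp (u := fun p : ℝ × ℝ => Real.exp (3 / 8 * p.2 ^ 2)) (by fun_prop)
  have hi : Integrable (fun g : Fin d → ℝ => Real.exp (3 / 8 * g i₀ ^ 2)) (gaussVec d 1) :=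
    integrable_comp_eval (μ := fun _ => gaussianReal 0 1) (i := i₀)
      (f := fun y => Real.exp (3 / 8 * y ^ 2))
      (integrable_exp_mul_sq_gaussianReal (by norm_num))
  refine ⟨h'.integrable_iff.2 hi, h'.integral_eq.trans ?_⟩
  refine (integral_comp_eval (μ := fun _ : Fin d => gaussianReal 0 1) (i := i₀)
      (f := fun y => Real.exp (3 / 8 * y ^ 2)) (by fun_prop)).trans ?_
  rw [integral_exp_mul_sq_gaussianReal (by norm_num), show 1 - 2 * (3 / 8 : ℝ) = (1 / 2) ^ 2 by
    norm_num, Real.sqrt_sq (by norm_num)]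
  norm_num

lemma integral_chiSq_mul_sq_dotProduct {d : ℕ} {x : Fin d → ℝ} (hx : ∑ l, x l ^ 2 = 1) :
    ∫ g, (∑ l, g l ^ 2 - d) * (∑ l, x l * g l) ^ 2 ∂(gaussVec d 1) = 2 := by
  obtain ⟨i₀, h⟩ := exists_identDistrib_normSq_dotProduct hx
  have h' := h.comp (u := fun p : ℝ × ℝ => (p.1 - d) * p.2 ^ 2) (by fun_prop)
  refine h'.integral_eq.trans ?_
  have e : ∀ g : Fin d → ℝ, ((fun p : ℝ × ℝ => (p.1 - d) * p.2 ^ 2) ∘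
      fun g : Fin d → ℝ => (∑ l, g l ^ 2, g i₀)) g = ∑ l, (g l ^ 2 - 1) * g i₀ ^ 2 := fun g => by
    simp [← Finset.sum_mul]
  simp_rw [e]
  have hp : ∀ (n : ℕ) (i : Fin d), Integrable (fun g : Fin d → ℝ => g i ^ n) (gaussVec d 1) :=
    fun n i => integrable_comp_eval (μ := fun _ => gaussianReal 0 1) (i := i)
      (f := fun y => y ^ n) (integrable_pow_gaussianReal n)
  have hpi : ∀ (n : ℕ) (i : Fin d), ∫ g : Fin d → ℝ, g i ^ n ∂(gaussVec d 1)
      = ∫ y, y ^ n ∂(gaussianReal 0 1) :=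
    fun n i => integral_comp_eval (μ := fun _ : Fin d => gaussianReal 0 1) (i := i)
      (f := fun y => y ^ n) (by fun_prop)
  have hind : ∀ l ≠ i₀, IndepFun (fun g : Fin d → ℝ => g l ^ 2 - 1) (fun g => g i₀ ^ 2)
      (gaussVec d 1) := fun l hl =>
    ((iIndepFun_pi (μ := fun _ : Fin d => gaussianReal 0 1) (X := fun _ => id)
      (fun i => aemeasurable_id)).indepFun hl).comp (φ := fun y : ℝ => y ^ 2 - 1)
      (ψ := fun y : ℝ => y ^ 2) (by fun_prop) (by fun_prop)
  have hint : ∀ l, Integrable (fun g : Fin d → ℝ => (g l ^ 2 - 1) * g i₀ ^ 2) (gaussVec d 1) ∧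
      ∫ g, (g l ^ 2 - 1) * g i₀ ^ 2 ∂(gaussVec d 1) = if l = i₀ then 2 else 0 := fun l => by
    split_ifs with hl
    · subst hl
      have e : ∀ g : Fin d → ℝ, (g l ^ 2 - 1) * g l ^ 2 = g l ^ 4 - g l ^ 2 := fun g => by ring
      simp_rw [e]
      refine ⟨(hp 4 l).sub (hp 2 l), ?_⟩
      rw [integral_sub (hp 4 l) (hp 2 l), hpi, hpi, integral_pow_four_gaussianReal,
        integral_sq_gaussianReal]
      norm_num
    · have h1 : Integrable (fun g : Fin d → ℝ => g l ^ 2 - 1) (gaussVec d 1) :=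
        (hp 2 l).sub (integrable_const _)
      refine ⟨(hind l hl).integrable_mul h1 (hp 2 i₀), ?_⟩
      rw [(hind l hl).integral_fun_mul_eq_mul_integral h1.aestronglyMeasurable
        (hp 2 i₀).aestronglyMeasurable, integral_sub (hp 2 l) (integrable_const _), hpi,
        integral_sq_gaussianReal]
      simp
  rw [integral_finsetSum _ fun l _ => (hint l).1]
  simp [fun l => (hint l).2]

lemma exp_le_one_add_self_add_sq_mul_exp_abs (y : ℝ) :
    Real.exp y ≤ 1 + y + y ^ 2 * Real.exp |y| := by
  have h1 : Real.exp y - 1 ≤ y * Real.exp y := by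
    have h := Real.add_one_le_exp (-y)
    rw [Real.exp_neg] at h
    have := mul_le_mul_of_nonneg_left h (Real.exp_nonneg y)
    rw [mul_inv_cancel₀ (Real.exp_pos y).ne'] at this
    linarith
  rcases le_total 0 y with hy | hy
  · rw [abs_of_nonneg hy]
    nlinarith [mul_le_mul_of_nonneg_left h1 hy]
  · have h2 := Real.add_one_le_exp y
    have h3 : 1 ≤ Real.exp |y| := Real.one_le_exp (abs_nonneg y)
    nlinarith [mul_le_mul_of_nonneg_left h3 (sq_nonneg y),
      mul_nonneg (neg_nonneg.2 hy) (sub_nonneg.2 h2)]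

section Truncation

variable {a K w q c : ℝ}

lemma pow_four_le_exp_sq (q : ℝ) : q ^ 4 ≤ 15 * Real.exp (3 / 8 * q ^ 2) := by
  have := Real.pow_div_factorial_le_exp (3 / 8 * q ^ 2) (by positivity) 2
  norm_num [Nat.factorial] at this
  nlinarith [sq_nonneg (q ^ 2)]

lemma abs_mul_sq_le (ha : 0 < a) :
    |w * q ^ 2| ≤ a * (2 * Real.exp (|w| / a) + 30 * Real.exp (3 / 8 * q ^ 2)) := by
  set u := |w| / a with hu
  have hu0 : 0 ≤ u := by positivity
  have hw : |w| = a * u := by rw [hu]; field_simp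
  rw [abs_mul, abs_of_nonneg (sq_nonneg q), hw, mul_assoc]
  gcongr
  have h1 := Real.pow_div_factorial_le_exp u hu0 2
  norm_num [Nat.factorial] at h1
  have h2 := pow_four_le_exp_sq q
  nlinarith [sq_nonneg (u - q ^ 2), Real.exp_pos (3 / 8 * q ^ 2), Real.exp_pos u]

lemma abs_mul_sq_sub_truncation_le (ha : 0 < a) :
    |w * q ^ 2 - if |w| ≤ K then w * q ^ 2 else 0|
      ≤ a * Real.exp (-K / (4 * a))
        * (2 * Real.exp (|w| / a) + 30 * Real.exp (3 / 8 * q ^ 2)) := by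
  split_ifs with h
  · simp only [sub_self, abs_zero]
    positivity
  rw [sub_zero]
  set u := |w| / a with hu
  have hu0 : 0 ≤ u := by positivity
  have hw : |w| = a * u := by rw [hu]; field_simp
  rw [abs_mul, abs_of_nonneg (sq_nonneg q), hw, mul_assoc, mul_assoc]
  refine mul_le_mul_of_nonneg_left ?_ ha.le
  have h1 : 1 ≤ Real.exp (-K / (4 * a)) * Real.exp (u / 4) := by
    rw [← Real.exp_add]
    apply Real.one_le_exp
    have : K ≤ a * u := by rw [← hw]; exact (not_le.1 h).le
    have : K / (4 * a) ≤ u / 4 := by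
      rw [div_le_div_iff₀ (by positivity) (by norm_num)]; linarith
    rw [neg_div]
    linarith
  have h2 := Real.add_one_le_exp (u / 4)
  have h3 := pow_four_le_exp_sq q
  have e4 : Real.exp u = Real.exp (u / 4) ^ 4 := by
    rw [← Real.exp_nat_mul]; congr 1; push_cast; ring
  set s := Real.exp (u / 4)
  have hs : 1 ≤ s := by linarith
  have h4 : u * q ^ 2 * s ≤ 2 * Real.exp u + 30 * Real.exp (3 / 8 * q ^ 2) := by
    have : u * q ^ 2 * s ≤ 4 * s * q ^ 2 * s := by gcongr; linarith
    rw [e4]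
    nlinarith [sq_nonneg (s ^ 2 - q ^ 2)]
  calc u * q ^ 2 ≤ u * q ^ 2 * (Real.exp (-K / (4 * a)) * s) :=
        le_mul_of_one_le_right (by positivity) h1
    _ = Real.exp (-K / (4 * a)) * (u * q ^ 2 * s) := by ring
    _ ≤ _ := by gcongr

lemma sq_truncation_mul_exp_le (ha : 0 < a) (hc : |c| * K ≤ 1 / 8) :
    (if |w| ≤ K then w * q ^ 2 else 0) ^ 2
        * Real.exp |c * if |w| ≤ K then w * q ^ 2 else 0|
      ≤ a ^ 2 * (12 * Real.exp (|w| / a) + 49152 * Real.exp (3 / 8 * q ^ 2)) := by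
  split_ifs with h
  swap
  · rw [zero_pow two_ne_zero, zero_mul]
    positivity
  set u := |w| / a with hu
  have hu0 : 0 ≤ u := by positivity
  have hw : |w| = a * u := by rw [hu]; field_simp
  have h1 : |c * (w * q ^ 2)| ≤ q ^ 2 / 8 := by
    rw [abs_mul, abs_mul, abs_of_nonneg (sq_nonneg q), ← mul_assoc]
    have : |c| * |w| ≤ 1 / 8 := (by gcongr : |c| * |w| ≤ |c| * K).trans hc
    nlinarith [mul_le_mul_of_nonneg_right this (sq_nonneg q)]
  have h2 : (w * q ^ 2) ^ 2 = a ^ 2 * (u ^ 2 * q ^ 4) := by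
    rw [mul_pow, ← sq_abs w, hw]; ring
  rw [h2, mul_assoc]
  gcongr
  have h3 := Real.pow_div_factorial_le_exp u hu0 4
  have h4 := Real.pow_div_factorial_le_exp (q ^ 2 / 8) (by positivity) 4
  norm_num [Nat.factorial] at h3 h4
  set s := Real.exp (q ^ 2 / 8) with hs
  have e3 : Real.exp (3 / 8 * q ^ 2) = s ^ 3 := by
    rw [hs, ← Real.exp_nat_mul]; congr 1; push_cast; ring
  rw [e3]
  have h5 : (q ^ 4) ^ 2 ≤ 98304 * s := by
    have e : (q ^ 2 / 8) ^ 4 = (q ^ 4) ^ 2 / 4096 := by ring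
    rw [e] at h4
    linarith
  have hs0 : 0 ≤ s := Real.exp_nonneg _
  calc u ^ 2 * q ^ 4 * Real.exp |c * (w * q ^ 2)| ≤ u ^ 2 * q ^ 4 * s := by
        gcongr
        exact Real.exp_le_exp.2 h1
    _ ≤ (u ^ 2) ^ 2 / 2 + (q ^ 4) ^ 2 * s ^ 2 / 2 := by
        nlinarith [sq_nonneg (u ^ 2 - q ^ 4 * s)]
    _ ≤ 12 * Real.exp u + 49152 * s ^ 3 := by
        have := mul_le_mul_of_nonneg_right h5 (sq_nonneg s)
        nlinarith

end Truncation

section Chernoff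

variable {Ω : Type*} [MeasurableSpace Ω] {μ : Measure Ω} [IsProbabilityMeasure μ]
  {w q : Ω → ℝ} {a K : ℝ}

lemma integral_exp_mul_truncation_le (hwm : Measurable w) (hqm : Measurable q) (ha : 0 < a)
    (hw : Integrable (fun ω => Real.exp (|w ω| / a)) μ)
    (hw3 : ∫ ω, Real.exp (|w ω| / a) ∂μ ≤ 3)
    (hq : Integrable (fun ω => Real.exp (3 / 8 * q ω ^ 2)) μ)
    (hq2 : ∫ ω, Real.exp (3 / 8 * q ω ^ 2) ∂μ ≤ 2)
    (hwq : ∫ ω, w ω * q ω ^ 2 ∂μ = 2) {c : ℝ} (hc : |c| * K ≤ 1 / 8) :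
    Integrable (fun ω => Real.exp (c * ((if |w ω| ≤ K then w ω * q ω ^ 2 else 0) - 2))) μ ∧
    ∫ ω, Real.exp (c * ((if |w ω| ≤ K then w ω * q ω ^ 2 else 0) - 2)) ∂μ
      ≤ Real.exp (66 * |c| * a * Real.exp (-K / (4 * a)) + 100000 * c ^ 2 * a ^ 2) := by
  set Z : Ω → ℝ := fun ω => if |w ω| ≤ K then w ω * q ω ^ 2 else 0 with hZ
  have hZm : Measurable Z := by
    refine Measurable.ite (measurableSet_le (by fun_prop) measurable_const) (by fun_prop)
      measurable_const
  have hYi : Integrable (fun ω => w ω * q ω ^ 2) μ :=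
    (((hw.const_mul 2).add (hq.const_mul 30)).const_mul a).mono' (by fun_prop)
      (.of_forall fun ω => abs_mul_sq_le ha)
  have hRle : ∀ ω, ‖w ω * q ω ^ 2 - Z ω‖ ≤ a * Real.exp (-K / (4 * a))
      * (2 * Real.exp (|w ω| / a) + 30 * Real.exp (3 / 8 * q ω ^ 2)) :=
    fun ω => abs_mul_sq_sub_truncation_le ha
  have hRi : Integrable (fun ω => w ω * q ω ^ 2 - Z ω) μ :=
    (((hw.const_mul 2).add (hq.const_mul 30)).const_mul _).mono' (by fun_prop)
      (.of_forall hRle)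
  have hZi : Integrable Z μ := (hYi.sub hRi).congr (.of_forall fun ω => by simp)
  have hR : |2 - ∫ ω, Z ω ∂μ| ≤ 66 * a * Real.exp (-K / (4 * a)) := by
    rw [← hwq, ← integral_sub hYi hZi]
    refine (norm_integral_le_of_norm_le
      (((hw.const_mul 2).add (hq.const_mul 30)).const_mul (a * Real.exp (-K / (4 * a))))
      (.of_forall hRle)).trans ?_
    rw [integral_const_mul]
    simp only [Pi.add_apply]
    rw [integral_add (hw.const_mul 2) (hq.const_mul 30), integral_const_mul, integral_const_mul]
    have : 0 < a * Real.exp (-K / (4 * a)) := by positivity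
    nlinarith
  have hB : Integrable (fun ω => a ^ 2 * (12 * Real.exp (|w ω| / a)
      + 49152 * Real.exp (3 / 8 * q ω ^ 2))) μ :=
    ((hw.const_mul 12).add (hq.const_mul 49152)).const_mul _
  have hle : ∀ ω, Real.exp (c * Z ω) ≤ 1 + c * Z ω + c ^ 2 * (a ^ 2 * (12 * Real.exp (|w ω| / a)
      + 49152 * Real.exp (3 / 8 * q ω ^ 2))) := fun ω => by
    refine (exp_le_one_add_self_add_sq_mul_exp_abs _).trans ?_
    rw [mul_pow, mul_assoc]
    exact add_le_add_right
      (mul_le_mul_of_nonneg_left (sq_truncation_mul_exp_le ha hc) (sq_nonneg c)) _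
  have hlin : Integrable (fun ω => 1 + c * Z ω) μ :=
    (integrable_const (1 : ℝ)).add (hZi.const_mul c)
  have hdom := hlin.add (hB.const_mul (c ^ 2))
  have hEi : Integrable (fun ω => Real.exp (c * Z ω)) μ :=
    hdom.mono' (by fun_prop) (.of_forall fun ω => by
      rw [Real.norm_of_nonneg (Real.exp_nonneg _)]; exact hle ω)
  have hsplit : ∀ ω, Real.exp (c * (Z ω - 2)) = Real.exp (-2 * c) * Real.exp (c * Z ω) :=
    fun ω => by rw [← Real.exp_add]; ring_nf
  have hmain : ∫ ω, Real.exp (c * Z ω) ∂μ ≤ 1 + c * ∫ ω, Z ω ∂μ + c ^ 2 * (a ^ 2 * 100000) := by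
    refine (integral_mono hEi hdom hle).trans ?_
    simp only [Pi.add_apply]
    rw [integral_add hlin (hB.const_mul _),
      integral_add (integrable_const _) (hZi.const_mul c), integral_const_mul, integral_const_mul,
      integral_const_mul, integral_add (hw.const_mul 12) (hq.const_mul 49152), integral_const_mul,
      integral_const_mul]
    simp only [integral_const, probReal_univ, one_smul]
    gcongr
    linarith
  change Integrable (fun ω => Real.exp (c * (Z ω - 2))) μ ∧
    ∫ ω, Real.exp (c * (Z ω - 2)) ∂μ ≤ _
  simp_rw [hsplit]
  refine ⟨hEi.const_mul _, ?_⟩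
  rw [integral_const_mul]
  calc Real.exp (-2 * c) * ∫ ω, Real.exp (c * Z ω) ∂μ
      ≤ Real.exp (-2 * c) * Real.exp (c * ∫ ω, Z ω ∂μ + c ^ 2 * (a ^ 2 * 100000)) := by
        gcongr
        refine hmain.trans ?_
        have := Real.add_one_le_exp (c * ∫ ω, Z ω ∂μ + c ^ 2 * (a ^ 2 * 100000))
        linarith
    _ = Real.exp (-(c * (2 - ∫ ω, Z ω ∂μ)) + 100000 * c ^ 2 * a ^ 2) := by
        rw [← Real.exp_add]; ring_nf
    _ ≤ _ := by
        gcongr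
        calc -(c * (2 - ∫ ω, Z ω ∂μ)) ≤ |c| * |2 - ∫ ω, Z ω ∂μ| := by
              rw [← abs_mul]; exact neg_le_abs _
          _ ≤ |c| * (66 * a * Real.exp (-K / (4 * a))) := by gcongr
          _ = _ := by ring

lemma measureReal_abs_sum_truncation_ge_le (N : ℕ) (hwm : Measurable w) (hqm : Measurable q)
    (ha : 0 < a) (hw : Integrable (fun ω => Real.exp (|w ω| / a)) μ)
    (hw3 : ∫ ω, Real.exp (|w ω| / a) ∂μ ≤ 3)
    (hq : Integrable (fun ω => Real.exp (3 / 8 * q ω ^ 2)) μ)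
    (hq2 : ∫ ω, Real.exp (3 / 8 * q ω ^ 2) ∂μ ≤ 2)
    (hwq : ∫ ω, w ω * q ω ^ 2 ∂μ = 2) {c : ℝ} (hc0 : 0 ≤ c) (hc : c * K ≤ 1 / 8) (t : ℝ) :
    (Measure.pi fun _ : Fin N => μ).real
        {ω | t ≤ |∑ i, ((if |w (ω i)| ≤ K then w (ω i) * q (ω i) ^ 2 else 0) - 2)|}
      ≤ 2 * Real.exp (-c * t
          + N * (66 * c * a * Real.exp (-K / (4 * a)) + 100000 * c ^ 2 * a ^ 2)) := by
  set Z : Ω → ℝ := fun ω => if |w ω| ≤ K then w ω * q ω ^ 2 else 0 with hZ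
  set P := Measure.pi fun _ : Fin N => μ
  have key : ∀ s : ℝ, |s| = 1 → P.real {ω | t ≤ s * ∑ i, (Z (ω i) - 2)} ≤ Real.exp (-c * t
          + N * (66 * c * a * Real.exp (-K / (4 * a)) + 100000 * c ^ 2 * a ^ 2)) := fun s hs => by
    have habs : |c * s| = c := by rw [abs_mul, hs, mul_one, abs_of_nonneg hc0]
    obtain ⟨hi, hb⟩ := integral_exp_mul_truncation_le hwm hqm ha hw hw3 hq hq2 hwq
      (c := c * s) (K := K) (by rw [habs]; exact hc)
    rw [habs, ← sq_abs (c * s), habs] at hb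
    have e : ∀ ω : Fin N → Ω, Real.exp (c * (s * ∑ i, (Z (ω i) - 2)))
        = ∏ i, Real.exp (c * s * (Z (ω i) - 2)) := fun ω => by
      rw [← Real.exp_sum, ← Finset.mul_sum, mul_assoc]
    have hI : Integrable (fun ω => Real.exp (c * (s * ∑ i, (Z (ω i) - 2)))) P := by
      simp_rw [e]
      exact Integrable.fintype_prod (f := fun _ ω => Real.exp (c * s * (Z ω - 2))) fun _ => hi
    refine (measure_ge_le_exp_mul_mgf t hc0 hI).trans ?_
    rw [mgf, Real.exp_add, Real.exp_nat_mul]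
    simp_rw [e]
    rw [integral_fintype_prod_eq_pow (fun ω => Real.exp (c * s * (Z ω - 2))), Fintype.card_fin]
    gcongr
  have hsub : {ω : Fin N → Ω | t ≤ |∑ i, (Z (ω i) - 2)|} ⊆
      {ω | t ≤ 1 * ∑ i, (Z (ω i) - 2)} ∪ {ω | t ≤ -1 * ∑ i, (Z (ω i) - 2)} := fun ω hω => by
    rcases le_abs.1 (Set.mem_ofPred.1 hω) with h | h
    · left; simpa using h
    · right; simpa using h
  refine (measureReal_mono hsub).trans ((measureReal_union_le _ _).trans ?_)
  rw [two_mul]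
  exact add_le_add (key 1 (by simp)) (key (-1) (by simp))

end Chernoff

lemma measureReal_lt_abs_le_exp {Ω : Type*} [MeasurableSpace Ω] {μ : Measure Ω}
    [IsFiniteMeasure μ] {w : Ω → ℝ} {a M : ℝ} (ha : 0 < a)
    (hw : Integrable (fun ω => Real.exp (|w ω| / a)) μ)
    (hM : ∫ ω, Real.exp (|w ω| / a) ∂μ ≤ M) (K : ℝ) :
    μ.real {ω | K < |w ω|} ≤ M * Real.exp (-K / a) := by
  have hsub : {ω | K < |w ω|} ⊆ {ω | Real.exp (K / a) ≤ Real.exp (|w ω| / a)} := fun ω hω => by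
    have : K < |w ω| := hω
    show Real.exp (K / a) ≤ Real.exp (|w ω| / a)
    gcongr
  refine (measureReal_mono hsub).trans ?_
  have h := (mul_meas_ge_le_integral_of_nonneg (.of_forall fun ω => Real.exp_nonneg _) hw
    (Real.exp (K / a))).trans hM
  rw [neg_div, Real.exp_neg, ← div_eq_mul_inv, le_div_iff₀' (Real.exp_pos _)]
  exact h

lemma exists_finset_half_net_sphere (d : ℕ) :
    ∃ s : Finset (EuclideanSpace ℝ (Fin d)), s.card ≤ 5 ^ d ∧ (∀ x ∈ s, ‖x‖ = 1) ∧
      ∀ y, ‖y‖ = 1 → ∃ x ∈ s, ‖y - x‖ ≤ 1 / 2 := by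
  classical
  by_contra! hcon
  have hcard : ∀ s : Finset (EuclideanSpace ℝ (Fin d)), (∀ x ∈ s, ‖x‖ = 1) →
      (∀ x ∈ s, ∀ y ∈ s, x ≠ y → 1 / 2 ≤ ‖x - y‖) → s.card ≤ 5 ^ d := fun s h1 h2 => by
    have h2inj : Function.Injective fun x : EuclideanSpace ℝ (Fin d) => (2 : ℝ) • x :=
      smul_right_injective _ two_ne_zero
    have := Besicovitch.card_le_of_separated (s.image fun x => (2 : ℝ) • x) (by
      simp only [Finset.forall_mem_image]
      intro x hx
      rw [norm_smul, h1 x hx]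
      norm_num) (by
      simp only [Finset.forall_mem_image]
      intro x hx y hy hxy
      rw [← smul_sub, norm_smul, Real.norm_of_nonneg zero_le_two]
      have := h2 x hx y hy fun h => hxy (by rw [h])
      linarith)
    rwa [Finset.card_image_of_injective _ h2inj, finrank_euclideanSpace_fin] at this
  have hex : ∀ k : ℕ, ∃ s : Finset (EuclideanSpace ℝ (Fin d)), s.card = k ∧ (∀ x ∈ s, ‖x‖ = 1) ∧
      (∀ x ∈ s, ∀ y ∈ s, x ≠ y → 1 / 2 ≤ ‖x - y‖) := fun k => by
    induction k with
    | zero => exact ⟨∅, by simp⟩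
    | succ k ih =>
      obtain ⟨s, rfl, h1, h2⟩ := ih
      obtain ⟨y, hy, hys⟩ := hcon s (hcard s h1 h2) h1
      have hyn : y ∉ s := fun h => by have := hys y h; norm_num at this
      refine ⟨insert y s, Finset.card_insert_of_notMem hyn, ?_, ?_⟩
      · simpa [Finset.forall_mem_insert, hy] using h1
      · intro x hx z hz hxz
        rcases Finset.mem_insert.1 hx with rfl | hx' <;>
          rcases Finset.mem_insert.1 hz with rfl | hz'
        · exact absurd rfl hxz
        · exact (hys z hz').le
        · rw [norm_sub_rev]; exact (hys x hx').le
        · exact h2 x hx' z hz' hxz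
  obtain ⟨s, hs, h1, h2⟩ := hex (5 ^ d + 1)
  have := hcard s h1 h2
  omega

section SelfAdjoint

variable {E : Type*} [NormedAddCommGroup E] [InnerProductSpace ℝ E] {T : E →L[ℝ] E}

lemma norm_le_of_abs_inner_self_le (hT : (T : E →ₗ[ℝ] E).IsSymmetric) {R : ℝ} (hR : 0 ≤ R)
    (h : ∀ y, ‖y‖ = 1 → |inner ℝ (T y) y| ≤ R) : ‖T‖ ≤ R := by
  have hT' : ∀ x y, inner ℝ (T x) y = inner ℝ x (T y) := hT
  have hsq : ∀ y, |inner ℝ (T y) y| ≤ R * ‖y‖ ^ 2 := fun y => by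
    rcases eq_or_ne y 0 with rfl | hy
    · simp
    have hn : ‖y‖ ≠ 0 := norm_ne_zero_iff.2 hy
    have := h (‖y‖⁻¹ • y) (norm_smul_inv_norm hy)
    rw [map_smul, real_inner_smul_left, real_inner_smul_right, abs_mul, abs_mul,
      abs_of_nonneg (by positivity)] at this
    field_simp at this
    linarith
  refine T.opNorm_le_of_unit_norm hR fun x hx => ?_
  rcases eq_or_ne (T x) 0 with h0 | h0
  · rw [h0, norm_zero]; exact hR
  set z := ‖T x‖⁻¹ • T x with hz
  have hzn : ‖z‖ = 1 := norm_smul_inv_norm h0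
  have e1 : inner ℝ (T x) z = ‖T x‖ := by
    rw [hz, real_inner_smul_right, real_inner_self_eq_norm_sq]
    field_simp [norm_ne_zero_iff.2 h0]
  have e2 : inner ℝ (T (x + z)) (x + z) - inner ℝ (T (x - z)) (x - z) = 4 * ‖T x‖ := by
    simp only [map_add, map_sub, inner_add_left, inner_add_right, inner_sub_left, inner_sub_right]
    rw [hT' z x, real_inner_comm (T x) z, e1]
    ring
  have h1 := (le_abs_self _).trans (hsq (x + z))
  have h2 := (neg_le_abs _).trans (hsq (x - z))
  have h3 := parallelogram_law_with_norm ℝ x z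
  rw [hx, hzn] at h3
  nlinarith

lemma norm_le_of_abs_inner_self_le_on_net (hT : (T : E →ₗ[ℝ] E).IsSymmetric) {s : Set E}
    (hs : ∀ x ∈ s, ‖x‖ = 1) (hnet : ∀ y, ‖y‖ = 1 → ∃ x ∈ s, ‖y - x‖ ≤ 1 / 2)
    {M : ℝ} (hM : 0 ≤ M) (h : ∀ x ∈ s, |inner ℝ (T x) x| ≤ M) : ‖T‖ ≤ 32 * M := by
  have hT' : ∀ x y, inner ℝ (T x) y = inner ℝ x (T y) := hT
  have := norm_le_of_abs_inner_self_le hT (R := M + ‖T‖ * (31 / 32)) (by positivity)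
    fun y hy => by
      obtain ⟨x, hx, hxy⟩ := hnet y hy
      have e : inner ℝ (T y) y - inner ℝ (T x) x = inner ℝ (T (y - x)) (y + x) := by
        simp only [map_sub, inner_add_right, inner_sub_left]
        rw [hT' x y, real_inner_comm (T y) x]
        ring
      have hpar := parallelogram_law_with_norm ℝ y x
      rw [hy, hs x hx] at hpar
      have hprod : ‖y - x‖ * ‖y + x‖ ≤ 31 / 32 := by
        apply le_of_sq_le_sq _ (by norm_num)
        have hr := norm_nonneg (y - x)
        have : ‖y - x‖ ^ 2 ≤ 1 / 4 := by nlinarith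
        nlinarith
      have h1 : |inner ℝ (T (y - x)) (y + x)| ≤ ‖T‖ * (31 / 32) :=
        calc _ ≤ ‖T (y - x)‖ * ‖y + x‖ := abs_real_inner_le_norm _ _
          _ ≤ ‖T‖ * ‖y - x‖ * ‖y + x‖ := by gcongr; exact T.le_opNorm _
          _ = ‖T‖ * (‖y - x‖ * ‖y + x‖) := by ring
          _ ≤ _ := by gcongr
      rw [← e] at h1
      have h2 := abs_add_le (inner ℝ (T x) x) (inner ℝ (T y) y - inner ℝ (T x) x)
      rw [add_sub_cancel] at h2
      exact h2.trans (add_le_add (h x hx) h1)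
  linarith

end SelfAdjoint

lemma specNorm_smul {m k : ℕ} (r : ℝ) (M : Matrix (Fin m) (Fin k) ℝ) :
    specNorm (r • M) = |r| * specNorm M := by
  simp only [specNorm, map_smul, norm_smul, Real.norm_eq_abs]

lemma specNorm_le_of_abs_dotProduct_le_on_net {d : ℕ} {A : Matrix (Fin d) (Fin d) ℝ}
    (hA : A.IsHermitian) {s : Set (EuclideanSpace ℝ (Fin d))} (hs : ∀ x ∈ s, ‖x‖ = 1)
    (hnet : ∀ y, ‖y‖ = 1 → ∃ x ∈ s, ‖y - x‖ ≤ 1 / 2) {M : ℝ} (hM : 0 ≤ M)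
    (h : ∀ x ∈ s, |WithLp.ofLp x ⬝ᵥ A *ᵥ WithLp.ofLp x| ≤ M) : specNorm A ≤ 32 * M := by
  refine norm_le_of_abs_inner_self_le_on_net (s := s) ?_ hs hnet hM fun x hx => ?_
  · rw [LinearMap.coe_toContinuousLinearMap]
    exact Matrix.isSymmetric_toEuclideanLin_iff.2 hA
  · convert h x hx using 2
    simp [EuclideanSpace.inner_eq_star_dotProduct]

lemma iidGaussVec_inv_eq_map (N k : ℕ) :
    iidGaussVec N k ((N : NNReal))⁻¹
      = (iidGaussVec N k 1).map fun G i l => (√(N : ℝ))⁻¹ * G i l := by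
  have h1 : gaussianReal 0 ((N : NNReal))⁻¹ = (gaussianReal 0 1).map ((√(N : ℝ))⁻¹ * ·) := by
    rw [gaussianReal_map_const_mul, mul_zero, mul_one]
    congr 1
    ext
    simp
  have hm : Measurable fun (g : Fin k → ℝ) l => (√(N : ℝ))⁻¹ * g l :=
    measurable_pi_lambda _ fun l => (measurable_pi_apply l).const_mul _
  have h2 : gaussVec k ((N : NNReal))⁻¹ = (gaussVec k 1).map fun g l => (√(N : ℝ))⁻¹ * g l := by
    simp only [gaussVec]
    rw [h1, Measure.pi_map_pi (fun _ => by fun_prop)]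
  simp only [iidGaussVec]
  rw [h2]
  have : IsProbabilityMeasure ((gaussVec k 1).map fun g l => (√(N : ℝ))⁻¹ * g l) :=
    Measure.isProbabilityMeasure_map hm.aemeasurable
  exact (Measure.pi_map_pi (μ := fun _ : Fin N => gaussVec k 1)
    (f := fun _ g l => (√(N : ℝ))⁻¹ * g l) fun _ => hm.aemeasurable).symm

lemma dotProduct_mulVec_sum_smul_vecMulVec_sub {N d : ℕ} (w : Fin N → ℝ) (G : Fin N → Fin d → ℝ)
    (r : ℝ) {x : Fin d → ℝ} (hx : ∑ l, x l ^ 2 = 1) :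
    x ⬝ᵥ ((∑ i, w i • vecMulVec (G i) (G i)) - r • (1 : Matrix (Fin d) (Fin d) ℝ)) *ᵥ x
      = ∑ i, w i * (∑ l, x l * G i l) ^ 2 - r := by
  have hxx : x ⬝ᵥ x = 1 := by rw [← hx]; simp [dotProduct, pow_two]
  rw [sub_mulVec, dotProduct_sub, sum_mulVec, dotProduct_sum]
  simp only [smul_mulVec, one_mulVec, dotProduct_smul, hxx, vecMulVec_mulVec, smul_eq_mul, mul_one]
  congr 1
  refine Finset.sum_congr rfl fun i _ => ?_
  simp only [op_smul_eq_smul, smul_eq_mul]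
  rw [dotProduct_comm (G i) x, ← pow_two]
  rfl

lemma measureReal_specNorm_sum_gt_le {N d : ℕ} (hd : 1 ≤ d) {K c t : ℝ} (hc0 : 0 ≤ c)
    (hc : c * K ≤ 1 / 8) (ht : 0 ≤ t) :
    (iidGaussVec N d 1).real {G | 32 * t < specNorm
        ((∑ i, ((∑ l, (G i l) ^ 2) - (d : ℝ)) • vecMulVec (G i) (G i))
          - (2 * N : ℝ) • (1 : Matrix (Fin d) (Fin d) ℝ))}
      ≤ 3 * N * Real.exp (-K / (8 * √d)) + 5 ^ d * (2 * Real.exp (-c * t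
          + N * (66 * c * (8 * √d) * Real.exp (-K / (4 * (8 * √d)))
            + 100000 * c ^ 2 * (8 * √d) ^ 2))) := by
  obtain ⟨s, hcard, hs, hnet⟩ := exists_finset_half_net_sphere d
  set a := 8 * √(d : ℝ) with hadef
  have ha : 0 < a := by
    have : (0 : ℝ) < d := by exact_mod_cast hd
    positivity
  set w : (Fin d → ℝ) → ℝ := fun g => ∑ l, g l ^ 2 - d with hwdef
  have hwm : Measurable w := by fun_prop
  obtain ⟨hwi, hw3⟩ := integrable_exp_abs_chiSq hd
  set P := iidGaussVec N d 1 with hP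
  have hPprob : IsProbabilityMeasure P := by rw [hP, iidGaussVec]; infer_instance
  set bad : ℝ := 2 * Real.exp (-c * t
          + N * (66 * c * a * Real.exp (-K / (4 * a)) + 100000 * c ^ 2 * a ^ 2)) with hbad
  have htrunc : ∀ i : Fin N, P.real {G | K < |w (G i)|} ≤ 3 * Real.exp (-K / a) := fun i => by
    have hmp : MeasurePreserving (Function.eval i) P (gaussVec d 1) :=
      measurePreserving_eval (μ := fun _ : Fin N => gaussVec d 1) i
    refine le_trans (le_of_eq ?_) (measureReal_lt_abs_le_exp ha hwi hw3 K)
    exact hmp.measureReal_preimage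
      (measurableSet_lt measurable_const hwm.abs).nullMeasurableSet
  have hpoint : ∀ x ∈ s, P.real {G | t ≤ |∑ i, ((if |w (G i)| ≤ K then
      w (G i) * (∑ l, x l * G i l) ^ 2 else 0) - 2)|} ≤ bad := fun x hx => by
    have hx1 : ∑ l, x l ^ 2 = 1 := by
      rw [← EuclideanSpace.real_norm_sq_eq, hs x hx, one_pow]
    obtain ⟨hqi, hq2⟩ := integrable_exp_sq_dotProduct hx1
    exact measureReal_abs_sum_truncation_ge_le (μ := gaussVec d 1) (w := w)
      (q := fun g => ∑ l, x l * g l) N hwm (by fun_prop) ha hwi hw3 hqi hq2.le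
      (integral_chiSq_mul_sq_dotProduct hx1) hc0 hc t
  have hsub : {G : Fin N → Fin d → ℝ | 32 * t < specNorm
        ((∑ i, ((∑ l, (G i l) ^ 2) - (d : ℝ)) • vecMulVec (G i) (G i))
          - (2 * N : ℝ) • (1 : Matrix (Fin d) (Fin d) ℝ))} ⊆
      (⋃ i : Fin N, {G | K < |w (G i)|}) ∪ ⋃ x ∈ s, {G | t ≤ |∑ i, ((if |w (G i)| ≤ K then
      w (G i) * (∑ l, x l * G i l) ^ 2 else 0) - 2)|} := fun G hG => by
    by_contra hcon
    simp only [Set.mem_union, Set.mem_iUnion, Set.mem_ofPred_eq, not_or, not_exists, not_lt,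
      not_le] at hcon
    obtain ⟨h1, h2⟩ := hcon
    refine not_le.2 hG (specNorm_le_of_abs_dotProduct_le_on_net ?_ (s := (s : Set _))
      (by simpa using hs) (by simpa using hnet) ht fun x hx => ?_)
    · refine IsHermitian.sub ?_ ?_
      · ext j k
        simp [Matrix.sum_apply, vecMulVec_apply, mul_comm]
      · ext j k
        simp [one_apply, eq_comm]
    · have hx1 : ∑ l, x l ^ 2 = 1 := by
        rw [← EuclideanSpace.real_norm_sq_eq, hs x hx, one_pow]
      rw [dotProduct_mulVec_sum_smul_vecMulVec_sub _ _ _ hx1]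
      have := (h2 x hx).le
      simp only [h1, if_true, Finset.sum_sub_distrib] at this
      simpa [mul_comm] using this
  refine (measureReal_mono hsub).trans ((measureReal_union_le _ _).trans (add_le_add ?_ ?_))
  · refine (measureReal_iUnion_fintype_le _).trans ((Finset.sum_le_sum fun i _ => htrunc i).trans ?_)
    simp only [Finset.sum_const, Finset.card_univ, Fintype.card_fin, nsmul_eq_mul]
    exact le_of_eq (by ring)
  · refine (measureReal_biUnion_finset_le _ _).trans ((Finset.sum_le_sum hpoint).trans ?_)
    rw [Finset.sum_const, nsmul_eq_mul]
    gcongr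
    exact_mod_cast hcard

lemma tail_bound_le {N d : ℕ} {δ L a s c t : ℝ} (hN : 2 ≤ N) (hδ0 : 0 < δ) (hδ1 : δ < 1)
    (hL : Real.exp L = N / δ) (hs : s = 2 * d + 2 * L) (hs1 : 1 ≤ s)
    (hca : c * a ≤ 1) (hcaN : N * (c ^ 2 * a ^ 2) ≤ s) (hct : c * t = 100100 * s) :
    3 * N * Real.exp (-(4 * L)) + 5 ^ d * (2 * Real.exp (-c * t
          + N * (66 * c * a * Real.exp (-L) + 100000 * c ^ 2 * a ^ 2))) ≤ δ := by
  have hN' : (2 : ℝ) ≤ N := by exact_mod_cast hN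
  have heL : Real.exp (-L) = δ / N := by rw [Real.exp_neg, hL, inv_div]
  have hr : δ / N ≤ 1 / 2 := by rw [div_le_div_iff₀ (by linarith) (by norm_num)]; linarith
  have hr0 : 0 < δ / N := by positivity
  have hrN : N * (δ / N) = δ := by field_simp
  have e4 : Real.exp (-(4 * L)) = (δ / N) ^ 4 := by
    rw [← heL, ← Real.exp_nat_mul]; congr 1; push_cast; ring
  have h5 : (5 : ℝ) ^ d ≤ Real.exp (2 * d) := by
    rw [mul_comm, Real.exp_nat_mul]
    gcongr
    have := Real.exp_one_gt_d9
    have e : Real.exp 2 = Real.exp 1 ^ 2 := by rw [← Real.exp_nat_mul]; norm_num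
    rw [e]
    nlinarith
  have hexp : -c * t + N * (66 * c * a * Real.exp (-L) + 100000 * c ^ 2 * a ^ 2) ≤ -s := by
    rw [heL]
    have h1 : N * (66 * c * a * (δ / N)) ≤ 66 := by
      have : N * (66 * c * a * (δ / N)) = 66 * (c * a) * δ := by
        rw [← hrN]; field_simp
      rw [this]
      have : c * a * δ ≤ 1 * 1 := by gcongr
      linarith
    nlinarith
  have hexp' : 5 ^ d * (2 * Real.exp (-c * t
      + N * (66 * c * a * Real.exp (-L) + 100000 * c ^ 2 * a ^ 2))) ≤ 2 * (δ / N) ^ 2 :=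
    calc _ ≤ Real.exp (2 * d) * (2 * Real.exp (-s)) := by gcongr
      _ = 2 * Real.exp (-L) ^ 2 := by
        rw [← Real.exp_nat_mul, mul_left_comm, ← Real.exp_add, hs]
        congr 2
        push_cast
        ring
      _ = _ := by rw [heL]
  rw [e4]
  have h6 : 3 * N * (δ / N) ^ 4 ≤ 3 / 8 * δ := by
    have : (δ / N) ^ 3 ≤ (1 / 2) ^ 3 := by gcongr
    calc 3 * N * (δ / N) ^ 4 = 3 * (N * (δ / N)) * (δ / N) ^ 3 := by ring
      _ ≤ 3 * δ * (1 / 2) ^ 3 := by rw [hrN]; gcongr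
      _ = _ := by ring
  have h7 : (δ / N) ^ 2 ≤ δ / 4 := by
    rw [div_pow, div_le_div_iff₀ (by positivity) (by norm_num)]
    have h1 : δ ^ 2 ≤ δ := by nlinarith
    have h2 : (4 : ℝ) ≤ N ^ 2 := by nlinarith
    nlinarith
  linarith

lemma deviation_le {N n d L : ℝ} (hN : 1 ≤ N) (hd : 1 ≤ d) (hdn : d ≤ n) (hL : 1 / 2 ≤ L) :
    32 * (8 * √d) * L * (2 * d + 2 * L) + 8 * √d * √(N * (2 * d + 2 * L))
      ≤ 1600 * (n * √N * √L + ((n * L) ^ (3 / 2 : ℝ) + L ^ 3)) := by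
  obtain ⟨x, hx, rfl⟩ : ∃ x : ℝ, 1 ≤ x ∧ d = x ^ 2 :=
    ⟨√d, Real.one_le_sqrt.2 hd, (Real.sq_sqrt (by linarith)).symm⟩
  obtain ⟨y, hy, rfl⟩ : ∃ y : ℝ, 0 < y ∧ L = y ^ 2 :=
    ⟨√L, Real.sqrt_pos.2 (by linarith), (Real.sq_sqrt (by linarith)).symm⟩
  have hx0 : 0 ≤ x := by linarith
  have hp : (x * y) ^ 3 ≤ (n * y ^ 2) ^ (3 / 2 : ℝ) := by
    calc (x * y) ^ 3 = (x ^ 2 * y ^ 2) ^ (3 / 2 : ℝ) := by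
          rw [← mul_pow, ← Real.rpow_natCast (x * y) 2, ← Real.rpow_mul (by positivity)]
          norm_num
      _ ≤ _ := by gcongr
  rw [Real.sqrt_sq hx0, Real.sqrt_sq hy.le, Real.sqrt_mul (by linarith)]
  have hy2 : 1 ≤ 2 * y := by nlinarith
  have hsq : √(2 * x ^ 2 + 2 * y ^ 2) ≤ 2 * (x + y) := by
    apply Real.sqrt_le_iff.2 ⟨by positivity, by nlinarith⟩
  have hxy : x + y ≤ 3 * (x * y) := by nlinarith
  have h1 : 8 * x * (√N * √(2 * x ^ 2 + 2 * y ^ 2)) ≤ 48 * (n * √N * y) := by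
    calc 8 * x * (√N * √(2 * x ^ 2 + 2 * y ^ 2)) ≤ 8 * x * (√N * (2 * (3 * (x * y)))) := by
          gcongr; linarith
      _ = 48 * (x ^ 2 * √N * y) := by ring
      _ ≤ _ := by gcongr
  have h2 : x ^ 3 * y ^ 2 ≤ 2 * (x * y) ^ 3 := by
    have := mul_le_mul_of_nonneg_left hy2 (by positivity : 0 ≤ x ^ 3 * y ^ 2)
    nlinarith
  have h3 : x * y ^ 4 ≤ (y ^ 2) ^ 3 + x ^ 3 * y ^ 2 := by
    rcases le_total x (y ^ 2) with h | h
    · have := mul_le_mul_of_nonneg_right h (by positivity : 0 ≤ y ^ 4)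
      have : 0 ≤ x ^ 3 * y ^ 2 := by positivity
      nlinarith
    · have h4 := mul_le_mul_of_nonneg_right h (by positivity : 0 ≤ x * y ^ 2)
      have h5 := mul_le_mul_of_nonneg_right hx (by positivity : 0 ≤ x ^ 2 * y ^ 2)
      have : 0 ≤ (y ^ 2) ^ 3 := by positivity
      nlinarith
  have h4 : 0 ≤ n * √N * y := by
    have : 0 ≤ n := by nlinarith
    positivity
  have h5 : 0 ≤ (y ^ 2) ^ 3 := by positivity
  have h6 : 0 ≤ (x * y) ^ 3 := by positivity
  nlinarith

lemma one_sub_le_iidGaussVec_specNorm_le {N d : ℕ} {n δ : ℝ} (hd : 1 ≤ d) (hn : n = d + 1)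
    (hnN : n ≤ N) (hδ0 : 0 < δ) (hδ1 : δ < 1) :
    ENNReal.ofReal (1 - δ) ≤ (iidGaussVec N d ((N : NNReal))⁻¹)
      {B | specNorm ((∑ i, ((∑ l, (B i l) ^ 2) - (n - 1) / N) • vecMulVec (B i) (B i))
            - ((2 : ℝ) / N) • (1 : Matrix (Fin d) (Fin d) ℝ))
        ≤ 3203200 * 1600 * (n * √(Real.log (N / δ)) / (N : ℝ) ^ ((3 : ℝ) / 2)
            + ((n * Real.log (N / δ)) ^ ((3 : ℝ) / 2) + (Real.log (N / δ)) ^ 3)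
                / (N : ℝ) ^ 2)} := by
  have hd' : (1 : ℝ) ≤ d := by exact_mod_cast hd
  have hN2 : (2 : ℝ) ≤ N := by linarith
  have hN0 : (0 : ℝ) < N := by linarith
  set L := Real.log (N / δ) with hLdef
  have hexpL : Real.exp L = N / δ := Real.exp_log (by positivity)
  have hL : 1 / 2 ≤ L := by
    have h2 : Real.log 2 ≤ L := by
      apply Real.log_le_log (by norm_num)
      rw [le_div_iff₀ hδ0]
      linarith
    have := Real.log_two_gt_d9
    linarith
  set a := 8 * √(d : ℝ) with ha
  have ha0 : 0 < a := by positivity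
  set s := 2 * (d : ℝ) + 2 * L with hs
  have hs1 : 1 ≤ s := by linarith
  set D := 8 * (4 * a * L) + a * √(N / s) with hD
  have hK0 : 0 < 8 * (4 * a * L) := by positivity
  have hR0 : 0 < a * √(N / s) := by positivity
  have hD0 : 0 < D := by positivity
  have hsD : s * D = 32 * a * L * s + a * √(N * s) := by
    have : s * √(N / s) = √(N * s) := by
      rw [← Real.sqrt_sq (by linarith : 0 ≤ s), ← Real.sqrt_mul (sq_nonneg s),
        Real.sqrt_sq (by linarith : 0 ≤ s)]
      congr 1
      field_simp
    rw [← this, hD]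
    ring
  have htail : (iidGaussVec N d 1).real {G | 32 * (100100 * (s * D)) < specNorm
        ((∑ i, ((∑ l, (G i l) ^ 2) - (d : ℝ)) • vecMulVec (G i) (G i))
          - (2 * N : ℝ) • (1 : Matrix (Fin d) (Fin d) ℝ))} ≤ δ := by
    refine (measureReal_specNorm_sum_gt_le hd (K := 4 * a * L) (c := D⁻¹) (by positivity) ?_
      (by positivity)).trans ?_
    · rw [inv_mul_le_iff₀ hD0]
      linarith
    · rw [← ha]
      have e1 : -(4 * a * L) / a = -(4 * L) := by field_simp
      have e2 : -(4 * a * L) / (4 * a) = -L := by field_simp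
      rw [e1, e2]
      refine tail_bound_le (L := L) (s := s) (by exact_mod_cast hN2) hδ0 hδ1 hexpL hs hs1
        ?_ ?_ (by field_simp)
      · rw [inv_mul_le_iff₀ hD0]
        nlinarith
      · have h1 : N * a ^ 2 ≤ s * D ^ 2 := by
          calc N * a ^ 2 = s * (a * √(N / s)) ^ 2 := by
                rw [mul_pow a √_, Real.sq_sqrt (by positivity), mul_left_comm,
                  mul_div_cancel₀ _ (by positivity), mul_comm]
            _ ≤ s * D ^ 2 := by gcongr; linarith
        rw [inv_pow, inv_mul_eq_div, mul_div_assoc', div_le_iff₀ (by positivity)]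
        exact h1
  have hdev := deviation_le (N := N) (n := n) (d := d) (L := L) (by linarith) hd' (by linarith) hL
  rw [← ha, ← hs, ← hsD] at hdev
  have hprob : IsProbabilityMeasure (iidGaussVec N d 1) := by rw [iidGaussVec]; infer_instance
  rw [iidGaussVec_inv_eq_map]
  have hm : Measurable fun (G : Fin N → Fin d → ℝ) i l => (√(N : ℝ))⁻¹ * G i l :=
    measurable_pi_lambda _ fun i => measurable_pi_lambda _ fun l =>
      ((measurable_pi_apply l).comp (measurable_pi_apply i) :
        Measurable fun G : Fin N → Fin d → ℝ => G i l).const_mul _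
  refine le_trans ?_ (Measure.le_map_apply hm.aemeasurable _)
  set S := (fun (G : Fin N → Fin d → ℝ) i l => (√(N : ℝ))⁻¹ * G i l) ⁻¹' _ with hS
  have hcompl : (iidGaussVec N d 1) Sᶜ ≤ ENNReal.ofReal δ := by
    rw [← ENNReal.ofReal_toReal (measure_ne_top _ Sᶜ)]
    refine ENNReal.ofReal_le_ofReal ((measureReal_mono fun G hG => ?_).trans htail)
    contrapose! hG
    simp only [Set.mem_ofPred_eq, not_lt, Set.mem_compl_iff, not_not, hS, Set.mem_preimage] at hG ⊢
    have hmat : ((∑ i, ((∑ l, ((√(N : ℝ))⁻¹ * G i l) ^ 2) - (n - 1) / N) •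
        vecMulVec (fun l => (√(N : ℝ))⁻¹ * G i l) fun l => (√(N : ℝ))⁻¹ * G i l)
          - ((2 : ℝ) / N) • (1 : Matrix (Fin d) (Fin d) ℝ))
        = ((N : ℝ) ^ 2)⁻¹ • ((∑ i, ((∑ l, (G i l) ^ 2) - (d : ℝ)) • vecMulVec (G i) (G i))
          - (2 * N : ℝ) • (1 : Matrix (Fin d) (Fin d) ℝ)) := by
      have hr : (√(N : ℝ))⁻¹ ^ 2 = (N : ℝ)⁻¹ := by rw [inv_pow, Real.sq_sqrt hN0.le]
      rw [smul_sub, Finset.smul_sum, smul_smul]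
      congr 2
      · ext i j k
        simp only [Matrix.smul_apply, vecMulVec_apply, smul_eq_mul, mul_pow, ← Finset.mul_sum, hr, hn]
        rw [mul_mul_mul_comm (√(N : ℝ))⁻¹, ← pow_two, hr]
        field_simp
        ring
      · field_simp
    rw [hmat, specNorm_smul, abs_of_pos (by positivity), inv_mul_le_iff₀ (by positivity)]
    refine hG.trans ?_
    have hpow : (N : ℝ) ^ ((3 : ℝ) / 2) * √N = N ^ 2 := by
      rw [Real.sqrt_eq_rpow, ← Real.rpow_add hN0]
      norm_num
    have e : (N : ℝ) ^ 2 * (3203200 * 1600 * (n * √L / (N : ℝ) ^ ((3 : ℝ) / 2)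
            + ((n * L) ^ ((3 : ℝ) / 2) + L ^ 3) / (N : ℝ) ^ 2))
        = 3203200 * (1600 * (n * √N * √L + ((n * L) ^ ((3 : ℝ) / 2) + L ^ 3))) := by
      have : (N : ℝ) ^ 2 * (n * √L / (N : ℝ) ^ ((3 : ℝ) / 2)) = n * √N * √L := by
        rw [← hpow]
        field_simp
      rw [mul_left_comm, mul_add, this, mul_div_cancel₀ _ (by positivity)]
      ring
    rw [e]
    linarith
  have h1 := measure_univ_le_add_compl (μ := iidGaussVec N d 1) S
  rw [measure_univ] at h1
  rw [ENNReal.ofReal_sub _ hδ0.le, ENNReal.ofReal_one, tsub_le_iff_right]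
  exact h1.trans (by gcongr)

/-- with `b_1, …, b_N` i.i.d. `N(0, (1/N) I_{n-1})`, there is a universal
constant `C > 0` such that for any `δ ∈ (0,1)`, with probability at least `1 - δ`,
`‖∑_i (‖b_i‖² - (n-1)/N) b_i b_iᵀ - (2/N) I_{n-1}‖
  ≤ C (n √(log(N/δ))/N^{3/2} + ((n log(N/δ))^{3/2} + log³(N/δ))/N²)` in spectral norm. -/
theorem stmt_5 :
    ∃ C : ℝ, 0 < C ∧
      ∀ (N n : ℕ) (δ : ℝ), 1 ≤ n → n ≤ N → 0 < δ → δ < 1 →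
        ENNReal.ofReal (1 - δ) ≤
          (iidGaussVec N (n - 1) ((N : NNReal))⁻¹)
            {B | specNorm
                ((∑ i, ((∑ l, (B i l) ^ 2) - ((n : ℝ) - 1) / N)
                      • Matrix.vecMulVec (B i) (B i))
                  - ((2 : ℝ) / N) • (1 : Matrix (Fin (n - 1)) (Fin (n - 1)) ℝ))
              ≤ C * (n * Real.sqrt (Real.log (N / δ)) / (N : ℝ) ^ ((3 : ℝ) / 2)
                  + ((n * Real.log (N / δ)) ^ ((3 : ℝ) / 2) + (Real.log (N / δ)) ^ 3)
                      / (N : ℝ) ^ 2)} := by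
  refine ⟨3203200 * 1600, by norm_num, fun N n δ hn hnN hδ0 hδ1 => ?_⟩
  have hcast : (n : ℝ) = ((n - 1 : ℕ) : ℝ) + 1 := by rw [Nat.cast_sub hn]; simp
  rcases Nat.eq_zero_or_pos (n - 1) with h0 | h0
  · have hN : (1 : ℝ) ≤ N := by exact_mod_cast hn.trans hnN
    have hL : 0 ≤ Real.log (N / δ) :=
      Real.log_nonneg (by rw [le_div_iff₀ hδ0]; linarith)
    have hprob : IsProbabilityMeasure (iidGaussVec N (n - 1) ((N : NNReal))⁻¹) := by
      rw [iidGaussVec]; infer_instance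
    have hempty : IsEmpty (Fin (n - 1)) := by rw [h0]; infer_instance
    refine le_trans (ENNReal.ofReal_le_one.2 (by linarith)) (le_of_eq ?_)
    rw [← measure_univ (μ := iidGaussVec N (n - 1) ((N : NNReal))⁻¹)]
    congr 1
    refine (Set.eq_univ_of_forall fun B => ?_).symm
    rw [Set.mem_ofPred_eq, Subsingleton.elim (_ - _ : Matrix (Fin (n - 1)) (Fin (n - 1)) ℝ) 0]
    have : specNorm (0 : Matrix (Fin (n - 1)) (Fin (n - 1)) ℝ) = 0 := by simp [specNorm]
    rw [this]
    positivity
  · exact one_sub_le_iidGaussVec_specNorm_le h0 hcast (by exact_mod_cast hnN) hδ0 hδ1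
end
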